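/- Assume Ω is a bounded C¹ domain with outward normal ν, a ∈ C(Ω̄×ℝ;𝕊ⁿ(θ₀)), b is Lipschitz with b(0)=0, the origin is globally asymptotically stable for Ẋ = b(X), and b·ν < 0 on ∂Ω. With the perturbed Hamiltonians 𝓗_δ^± and quasi-potentials V_δ^± defined in the context (for a fixed β₀ and any admissible choice of cutoffs χ_δ), setting M_δ^± := min_{∂Ω} V_δ^±, Γ_δ^± := argmin(V_δ^±|∂Ω), M₀ := min_{∂Ω} V₀ and Γ₀ := argmin(V₀|∂Ω), one has: lim_{δ→0⁺} M_δ⁺ = lim_{δ→0⁺} M_δ⁻ = M₀, and the Kuratowski upper limits satisfy limsup_{δ→0⁺} Γ_δ⁺ ∪ limsup_{δ→0⁺} Γ_δ⁻ ⊂ Γ₀. -/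

import Mathlib

open Set Filter Metric Topology
open scoped ENNReal

noncomputable section

/-- `n`-dimensional Euclidean space. -/
abbrev Eu (n : ℕ) := EuclideanSpace ℝ (Fin n)

variable {n : ℕ}

/-- Euclidean dot product. -/
def dotp (x y : Eu n) : ℝ := ∑ i, x i * y i

/-- The quadratic form `A p · p` of a matrix `A`. -/
def mquad (A : Matrix (Fin n) (Fin n) ℝ) (p : Eu n) : ℝ := ∑ i, ∑ j, A i j * p i * p j

/-- `A ∈ 𝕊ⁿ(θ)`: symmetric with `θ I ≤ A ≤ θ⁻¹ I`. -/
def memS (θ : ℝ) (A : Matrix (Fin n) (Fin n) ℝ) : Prop :=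
  A.IsSymm ∧ ∀ p : Eu n, θ * ‖p‖ ^ 2 ≤ mquad A p ∧ mquad A p ≤ θ⁻¹ * ‖p‖ ^ 2

/-- order of symmetric matrices (via quadratic forms). -/
def mle (A B : Matrix (Fin n) (Fin n) ℝ) : Prop := ∀ p : Eu n, mquad A p ≤ mquad B p

/-- trace of the product `A·H`. -/
def trMul (A H : Matrix (Fin n) (Fin n) ℝ) : ℝ := ∑ i, ∑ j, A i j * H j i

/-- the Pucci maximal operator associated with `𝕊ⁿ(θ)`. -/
def pucci (θ : ℝ) (X : Matrix (Fin n) (Fin n) ℝ) : ℝ :=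
  sSup ((fun A => trMul A X) '' {A | memS θ A})

/-- time derivative of `u(x,t)`. -/
def tD (u : Eu n → ℝ → ℝ) (x : Eu n) (t : ℝ) : ℝ := deriv (u x) t

/-- spatial gradient of `u(x,t)`. -/
def sG (u : Eu n → ℝ → ℝ) (x : Eu n) (t : ℝ) : Eu n := gradient (fun y => u y t) x

/-- spatial Hessian matrix of `u(x,t)`. -/
def sH (u : Eu n → ℝ → ℝ) (x : Eu n) (t : ℝ) : Matrix (Fin n) (Fin n) ℝ :=
  fun i j => fderiv ℝ (fun y => sG u y t i) x (EuclideanSpace.single j 1)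

/-- Hessian matrix of a static function. -/
def hessS (v : Eu n → ℝ) (x : Eu n) : Matrix (Fin n) (Fin n) ℝ :=
  fun i j => fderiv ℝ (fun y => gradient v y i) x (EuclideanSpace.single j 1)

/-- closed parabolic cylinder `Q̄_T = closure Ω × [0,T]` (with `T ∈ (0,∞]`). -/
def cylC (Ω : Set (Eu n)) (T : ℝ≥0∞) : Set (Eu n × ℝ) :=
  {p | p.1 ∈ closure Ω ∧ 0 ≤ p.2 ∧ ENNReal.ofReal p.2 ≤ T}

/-- open parabolic cylinder `Q_T = Ω × (0,T)`. -/
def cylO (Ω : Set (Eu n)) (T : ℝ≥0∞) : Set (Eu n × ℝ) :=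
  {p | p.1 ∈ Ω ∧ 0 < p.2 ∧ ENNReal.ofReal p.2 < T}

/-- `u ∈ C^{2,1}(Q_T)`. -/
def C21 (u : Eu n → ℝ → ℝ) (Ω : Set (Eu n)) (T : ℝ≥0∞) : Prop :=
  (∀ x ∈ Ω, ∀ t : ℝ, 0 < t → ENNReal.ofReal t < T →
     ContDiffAt ℝ 2 (fun y => u y t) x ∧ DifferentiableAt ℝ (u x) t) ∧
  ContinuousOn (fun p : Eu n × ℝ => tD u p.1 p.2) (cylO Ω T) ∧
  ContinuousOn (fun p : Eu n × ℝ => sH u p.1 p.2) (cylO Ω T)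

/-- `u ∈ C(Q̄_T) ∩ C^{2,1}(Q_T)`. -/
def Classical21 (u : Eu n → ℝ → ℝ) (Ω : Set (Eu n)) (T : ℝ≥0∞) : Prop :=
  ContinuousOn (fun p : Eu n × ℝ => u p.1 p.2) (cylC Ω T) ∧ C21 u Ω T

/-- a coefficient field in `C(Q̄_T; 𝕊ⁿ(θ))`. -/
def MatC (θ : ℝ) (A : Eu n → ℝ → Matrix (Fin n) (Fin n) ℝ) (Ω : Set (Eu n))
    (T : ℝ≥0∞) : Prop :=
  ContinuousOn (fun p : Eu n × ℝ => A p.1 p.2) (cylC Ω T) ∧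
  ∀ p ∈ cylC Ω T, memS θ (A p.1 p.2)

/-- `u` is a classical solution of `u_t = ε tr[A D²u] + b·Du` in `Q_T`. -/
def SolveL (ε : ℝ) (A : Eu n → ℝ → Matrix (Fin n) (Fin n) ℝ) (b : Eu n → Eu n)
    (u : Eu n → ℝ → ℝ) (Ω : Set (Eu n)) (T : ℝ≥0∞) : Prop :=
  ∀ x ∈ Ω, ∀ t : ℝ, 0 < t → ENNReal.ofReal t < T →
    tD u x t = ε * trMul (A x t) (sH u x t) + dotp (b x) (sG u x t)

/-- `u` is a classical subsolution of `(L)` in `Q_T`. -/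
def SubsolL (ε : ℝ) (A : Eu n → ℝ → Matrix (Fin n) (Fin n) ℝ) (b : Eu n → Eu n)
    (u : Eu n → ℝ → ℝ) (Ω : Set (Eu n)) (T : ℝ≥0∞) : Prop :=
  ∀ x ∈ Ω, ∀ t : ℝ, 0 < t → ENNReal.ofReal t < T →
    tD u x t ≤ ε * trMul (A x t) (sH u x t) + dotp (b x) (sG u x t)

/-- `u` is a classical supersolution of `(L)` in `Q_T`. -/
def SupersolL (ε : ℝ) (A : Eu n → ℝ → Matrix (Fin n) (Fin n) ℝ) (b : Eu n → Eu n)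
    (u : Eu n → ℝ → ℝ) (Ω : Set (Eu n)) (T : ℝ≥0∞) : Prop :=
  ∀ x ∈ Ω, ∀ t : ℝ, 0 < t → ENNReal.ofReal t < T →
    ε * trMul (A x t) (sH u x t) + dotp (b x) (sG u x t) ≤ tD u x t

/-- viscosity subsolution of `H(x,Du) = 0` on `A`. -/
def ViscSub (H : Eu n → Eu n → ℝ) (A : Set (Eu n)) (u : Eu n → ℝ) : Prop :=
  ∀ φ : Eu n → ℝ, ContDiff ℝ 1 φ → ∀ x ∈ A,
    IsLocalMaxOn (fun y => u y - φ y) A x → H x (gradient φ x) ≤ 0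

/-- viscosity supersolution of `H(x,Du) = 0` on `A`. -/
def ViscSup (H : Eu n → Eu n → ℝ) (A : Set (Eu n)) (u : Eu n → ℝ) : Prop :=
  ∀ φ : Eu n → ℝ, ContDiff ℝ 1 φ → ∀ x ∈ A,
    IsLocalMinOn (fun y => u y - φ y) A x → 0 ≤ H x (gradient φ x)

/-- the Hamiltonian `H_α(x,p) = α(x) p·p + b(x)·p`. -/
def Ham (α : Eu n → Matrix (Fin n) (Fin n) ℝ) (b : Eu n → Eu n) (x p : Eu n) : ℝ :=
  mquad (α x) p + dotp (b x) p

/-- the quasi-potential `V_α`: the pointwise supremum (= maximal element) of all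
Lipschitz viscosity subsolutions of `H_α(x,Du)=0` in `Ω` vanishing at the origin. -/
def Vq (α : Eu n → Matrix (Fin n) (Fin n) ℝ) (b : Eu n → Eu n) (Ω : Set (Eu n))
    (x : Eu n) : ℝ :=
  sSup {r | ∃ u : Eu n → ℝ, (∃ K : NNReal, LipschitzOnWith K u (closure Ω)) ∧
    u 0 = 0 ∧ ViscSub (Ham α b) Ω u ∧ r = u x}

/-- `M_α = min_{∂Ω} V_α`. -/
def Mq (α : Eu n → Matrix (Fin n) (Fin n) ℝ) (b : Eu n → Eu n) (Ω : Set (Eu n)) : ℝ :=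
  sInf (Vq α b Ω '' frontier Ω)

/-- `argmin (V_α | ∂Ω)`. -/
def argminV (α : Eu n → Matrix (Fin n) (Fin n) ℝ) (b : Eu n → Eu n)
    (Ω : Set (Eu n)) : Set (Eu n) :=
  {x ∈ frontier Ω | ∀ y ∈ frontier Ω, Vq α b Ω x ≤ Vq α b Ω y}

/-- `Σ_α^m = {x ∈ Ω̄ : V_α(x) ≤ m}`. -/
def SigmaM (α : Eu n → Matrix (Fin n) (Fin n) ℝ) (b : Eu n → Eu n) (Ω : Set (Eu n))
    (m : ℝ) : Set (Eu n) :=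
  {x ∈ closure Ω | Vq α b Ω x ≤ m}

/-- `Ω` is a bounded `C¹` domain with outward unit normal `ν`. -/
def IsBdC1With (Ω : Set (Eu n)) (ν : Eu n → Eu n) : Prop :=
  IsOpen Ω ∧ Bornology.IsBounded Ω ∧
  ∃ ρ : Eu n → ℝ, ContDiff ℝ 1 ρ ∧ Ω = {x | ρ x < 0} ∧
    ∀ x ∈ frontier Ω, gradient ρ x ≠ 0 ∧ ν x = ‖gradient ρ x‖⁻¹ • gradient ρ x

/-- `X` is the flow of `b`, and the origin is globally asymptotically stable. -/
def GAS (b : Eu n → Eu n) (X : ℝ → Eu n → Eu n) : Prop :=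
  (∀ x, X 0 x = x) ∧ (∀ x t, HasDerivAt (fun s => X s x) (b (X t x)) t) ∧
  (∀ x, Tendsto (fun t => X t x) atTop (nhds 0)) ∧
  (∀ ε > (0:ℝ), ∃ δ > (0:ℝ), ∀ x : Eu n, ‖x‖ < δ → ∀ t ≥ (0:ℝ), ‖X t x‖ < ε)

/-- `Ω_δ = {x ∈ Ω : dist(x,∂Ω) > δ}`. -/
def Omd (Ω : Set (Eu n)) (δ : ℝ) : Set (Eu n) := {x ∈ Ω | δ < infDist x (frontier Ω)}

/-- `Ω^Π_δ = {x ∈ Ω̄ : dist(x, ∂Ω \ Π) > δ}`. -/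
def OmPid (Ω Pset : Set (Eu n)) (δ : ℝ) : Set (Eu n) :=
  {x ∈ closure Ω | δ < infDist x (frontier Ω \ Pset)}

/-- the standing assumptions (B). -/
structure SettingB (n : ℕ) where
  Ω : Set (Eu n)
  ν : Eu n → Eu n
  g : Eu n → ℝ
  θ₀ : ℝ
  a : Eu n → ℝ → Matrix (Fin n) (Fin n) ℝ
  b : Eu n → Eu n
  b₀ : ℝ
  r₀ : ℝ
  θ₀_mem : θ₀ ∈ Set.Ioc (0 : ℝ) 1
  domain : IsBdC1With Ω ν
  zero_mem : (0 : Eu n) ∈ Ω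
  g_cont : ContinuousOn g (closure Ω)
  a_cont : ContinuousOn (fun p : Eu n × ℝ => a p.1 p.2) (closure Ω ×ˢ Set.univ)
  a_mem : ∀ x ∈ closure Ω, ∀ c : ℝ, memS θ₀ (a x c)
  b_lip : ∃ K : NNReal, LipschitzWith K b
  b_zero : b 0 = 0
  b_gas : ∃ X : ℝ → Eu n → Eu n, GAS b X
  b_inward : ∀ x ∈ frontier Ω, dotp (b x) (ν x) < 0
  b₀_pos : 0 < b₀
  r₀_pos : 0 < r₀
  ball_sub : closedBall (0 : Eu n) r₀ ⊆ Ω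
  b_coerc : ∀ x ∈ ball (0 : Eu n) r₀, dotp (b x) x ≤ -b₀ * ‖x‖ ^ 2

namespace SettingB

variable (S : SettingB n)

/-- the quasi-potential `V^c` associated with `(a(·,c), b)`. -/
def Vc (c : ℝ) : Eu n → ℝ := Vq (fun x => S.a x c) S.b S.Ω

/-- `M(c) = min_{∂Ω} V^c`. -/
def M (c : ℝ) : ℝ := sInf (S.Vc c '' frontier S.Ω)

/-- `G(c) = {g(x) : x ∈ argmin(V^c|∂Ω)}`. -/
def Gset (c : ℝ) : Set ℝ := S.g '' argminV (fun x => S.a x c) S.b S.Ω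

/-- `G⁺(c) = max G(c)`. -/
def Gp (c : ℝ) : ℝ := sSup (S.Gset c)

/-- `G⁻(c) = min G(c)`. -/
def Gm (c : ℝ) : ℝ := sInf (S.Gset c)

/-- `c₀ = g(0)`. -/
def c0 : ℝ := S.g 0

/-- `g_min = min_{Ω̄} g`. -/
def gmin : ℝ := sInf (S.g '' closure S.Ω)

/-- `g_max = max_{Ω̄} g`. -/
def gmax : ℝ := sSup (S.g '' closure S.Ω)

/-- the crossing value `c₁`. -/
def c1 : ℝ :=
  if S.c0 ≤ S.Gp S.c0 then sInf {c | S.c0 ≤ c ∧ S.Gm c ≤ c}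
  else sSup {c | c ≤ S.c0 ∧ c ≤ S.Gp c}

/-- the function `c̄ : (0,∞) → I_g`. -/
def cbar (l : ℝ) : ℝ :=
  if l < S.M S.c0 ∨ S.c1 = S.c0 then S.c0
  else if S.c0 < S.c1 then min S.c1 (sInf {c | c ∈ Set.Icc S.c0 S.c1 ∧ S.M c = l})
  else max S.c1 (sSup {c | c ∈ Set.Icc S.c1 S.c0 ∧ S.M c = l})

/-- assumption (FK13): `G⁺(c₀) = G⁻(c₀)`. -/
def FK13 : Prop := S.Gp S.c0 = S.Gm S.c0

/-- assumption (FK12). -/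
def FK12 : Prop :=
  ∀ δ₀ > (0:ℝ), ∃ δ ∈ Set.Ioc (0:ℝ) δ₀,
    (S.c1 ≤ S.c0 ∧ S.gmin < S.c1 → S.c1 - δ < S.Gm (S.c1 - δ)) ∧
    (S.c0 ≤ S.c1 ∧ S.c1 < S.gmax → S.Gp (S.c1 + δ) < S.c1 + δ)

/-- `u` is a classical (`C(Q̄) ∩ C^{2,1}(Q)`) solution of the quasi-linear equation (QL). -/
def SolvesQL (ε : ℝ) (u : Eu n → ℝ → ℝ) : Prop :=
  Classical21 u S.Ω ⊤ ∧ SolveL ε (fun x t => S.a x (u x t)) S.b u S.Ω ⊤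

/-- the boundary condition (BC): `u = g` on the parabolic boundary of `Q`. -/
def BC (u : Eu n → ℝ → ℝ) : Prop :=
  (∀ x ∈ closure S.Ω, u x 0 = S.g x) ∧ ∀ x ∈ frontier S.Ω, ∀ t > (0:ℝ), u x t = S.g x

end SettingB

/-- Kuratowski upper limit of a family of sets as `δ → 0⁺` (within `(0,δ₀)`). -/
def KurLimsup {n : ℕ} (δ₀ : ℝ) (Γ : ℝ → Set (Eu n)) : Set (Eu n) :=
  {x | ∃ (δs : ℕ → ℝ) (xs : ℕ → Eu n),
    (∀ k, δs k ∈ Set.Ioo (0:ℝ) δ₀) ∧ Filter.Tendsto δs Filter.atTop (nhds 0) ∧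
    (∀ k, xs k ∈ Γ (δs k)) ∧ Filter.Tendsto xs Filter.atTop (nhds x)}


lemma dotp_eq (x y : Eu n) : dotp x y = inner ℝ x y := by
  simp [dotp, PiLp.inner_apply, mul_comm]

lemma mquad_add (A B : Matrix (Fin n) (Fin n) ℝ) (p : Eu n) :
    mquad (A + B) p = mquad A p + mquad B p := by
  simp [mquad, add_mul, Finset.sum_add_distrib]

lemma mquad_sub (A B : Matrix (Fin n) (Fin n) ℝ) (p : Eu n) :
    mquad (A - B) p = mquad A p - mquad B p := by
  simp [mquad, sub_mul, Finset.sum_sub_distrib]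

lemma mquad_smul (c : ℝ) (A : Matrix (Fin n) (Fin n) ℝ) (p : Eu n) :
    mquad (c • A) p = c * mquad A p := by
  simp [mquad, Finset.mul_sum, mul_assoc]

lemma mquad_one (p : Eu n) : mquad (1 : Matrix (Fin n) (Fin n) ℝ) p = ‖p‖ ^ 2 := by
  rw [EuclideanSpace.real_norm_sq_eq]
  simp [mquad, Matrix.one_apply, pow_two]

lemma mquad_vsmul (A : Matrix (Fin n) (Fin n) ℝ) (t : ℝ) (p : Eu n) :
    mquad A (t • p) = t ^ 2 * mquad A p := by
  simp only [mquad, Finset.mul_sum, PiLp.smul_apply, smul_eq_mul]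
  refine Finset.sum_congr rfl fun i _ => Finset.sum_congr rfl fun j _ => by ring

lemma mquad_cont : Continuous (fun q : Matrix (Fin n) (Fin n) ℝ × Eu n => mquad q.1 q.2) := by
  unfold mquad
  refine continuous_finsetSum _ fun i _ => continuous_finsetSum _ fun j _ => ?_
  have h1 : Continuous (fun q : Matrix (Fin n) (Fin n) ℝ × Eu n => q.1 i j) :=
    continuous_fst.matrix_elem i j
  have h2 : ∀ i, Continuous (fun q : Matrix (Fin n) (Fin n) ℝ × Eu n => q.2 i) := fun i =>
    (EuclideanSpace.proj i : Eu n →L[ℝ] ℝ).continuous.comp continuous_snd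
  exact (h1.mul (h2 i)).mul (h2 j)

lemma c1_hasGrad {φ : Eu n → ℝ} (h : ContDiff ℝ 1 φ) (x : Eu n) :
    HasGradientAt φ (gradient φ x) x :=
  ((h.differentiable (by norm_num)) x).hasGradientAt

lemma c1_grad_cont {φ : Eu n → ℝ} (h : ContDiff ℝ 1 φ) : Continuous (gradient φ) := by
  unfold gradient
  exact (LinearIsometryEquiv.continuous _).comp (h.continuous_fderiv (by norm_num))

lemma hasGrad_add {f g : Eu n → ℝ} {p q x : Eu n} (hf : HasGradientAt f p x)
    (hg : HasGradientAt g q x) : HasGradientAt (fun y => f y + g y) (p + q) x := by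
  rw [hasGradientAt_iff_hasFDerivAt] at *
  rw [map_add]
  exact hf.add hg

lemma hasGrad_sub {f g : Eu n → ℝ} {p q x : Eu n} (hf : HasGradientAt f p x)
    (hg : HasGradientAt g q x) : HasGradientAt (fun y => f y - g y) (p - q) x := by
  rw [hasGradientAt_iff_hasFDerivAt] at *
  rw [map_sub]
  exact hf.sub hg

lemma hasGrad_cmul {f : Eu n → ℝ} {p x : Eu n} (c : ℝ) (hf : HasGradientAt f p x) :
    HasGradientAt (fun y => c * f y) (c • p) x := by
  rw [hasGradientAt_iff_hasFDerivAt] at *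
  simpa using hf.const_mul c

lemma hasGrad_sq (z x : Eu n) :
    HasGradientAt (fun y => ‖y - z‖ ^ 2) ((2:ℝ) • (x - z)) x := by
  rw [hasGradientAt_iff_hasFDerivAt]
  have h := ((hasFDerivAt_id (𝕜 := ℝ) x).sub_const z).norm_sq
  refine h.congr_fderiv ?_
  ext v
  simp [InnerProductSpace.toDual_apply_apply]

lemma contDiff_sq (z : Eu n) : ContDiff ℝ 1 (fun y : Eu n => ‖y - z‖ ^ 2) :=
  (contDiff_id.sub contDiff_const).norm_sq ℝ

lemma hasGrad_eq_zero {f : Eu n → ℝ} {p x : Eu n} (hf : HasGradientAt f p x)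
    (h : IsLocalMax f x) : p = 0 := by
  rw [hasGradientAt_iff_hasFDerivAt] at hf
  have := h.hasFDerivAt_eq_zero hf
  simpa using this

/-- coercivity of the Hamiltonian -/
lemma ham_coercive {α : Eu n → Matrix (Fin n) (Fin n) ℝ} {b : Eu n → Eu n} {x p : Eu n}
    {θ B : ℝ} (hθ : 0 < θ) (h1 : θ * ‖p‖ ^ 2 ≤ mquad (α x) p) (h2 : ‖b x‖ ≤ B)
    (h : Ham α b x p ≤ 0) : ‖p‖ ≤ B / θ := by
  unfold Ham at h
  rw [dotp_eq] at h
  have h3 := abs_real_inner_le_norm (b x) p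
  have h4 := (abs_le.1 h3).1
  rw [le_div_iff₀ hθ]
  rcases eq_or_lt_of_le (norm_nonneg p) with h0 | h0
  · rw [← h0]; simpa using (norm_nonneg _).trans h2
  · have : ‖b x‖ * ‖p‖ ≤ B * ‖p‖ := by gcongr
    have : ‖p‖ * θ * ‖p‖ ≤ B * ‖p‖ := by nlinarith
    exact le_of_mul_le_mul_right this h0


lemma visc_local_step {Ω : Set (Eu n)} {u : Eu n → ℝ} {K : NNReal}
    {H : Eu n → Eu n → ℝ} {C : ℝ} (hC : 0 < C)
    (hu : LipschitzOnWith K u (closure Ω)) (hv : ViscSub H Ω u)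
    (hH : ∀ x ∈ Ω, ∀ p, H x p ≤ 0 → ‖p‖ ≤ C) {x y : Eu n} {R : ℝ} (hR : 0 < R)
    (hRΩ : closedBall x R ⊆ Ω) (hy0 : 0 < ‖y - x‖) (hyR : ‖y - x‖ ≤ R)
    (hyK : ‖y - x‖ * (K + 1) < C * R) :
    ∃ y0 ∈ ball x R, ‖y0 - x‖ ≤ ‖y - x‖ / 2 ∧ u y - u x ≤ C * ‖y - x‖ + (u y0 - u x) := by
  set h := ‖y - x‖ with hh
  set q : ℝ := C / h with hq
  have hqpos : 0 < q := div_pos hC hy0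
  have hcont : ContinuousOn (fun w => u w - q * ‖w - x‖ ^ 2) (closedBall x R) := by
    refine ContinuousOn.sub (hu.continuousOn.mono (hRΩ.trans subset_closure)) ?_
    fun_prop
  obtain ⟨y0, hy0B, hmax⟩ := (isCompact_closedBall x R).exists_isMaxOn
    ⟨x, mem_closedBall_self hR.le⟩ hcont
  have hxB : x ∈ closedBall x R := mem_closedBall_self hR.le
  have hmx := hmax hxB
  have hmy := hmax (show y ∈ closedBall x R by rw [mem_closedBall, dist_eq_norm]; exact hyR)
  simp only [mem_ofPred_eq, sub_self, norm_zero] at hmx hmy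
  have hlip : u y0 - u x ≤ K * ‖y0 - x‖ := by
    have := hu.dist_le_mul y0 (subset_closure (hRΩ hy0B)) x (subset_closure (hRΩ hxB))
    rw [Real.dist_eq, dist_eq_norm] at this
    exact (le_abs_self _).trans this
  have hne : ‖y0 - x‖ < R := by
    have hle : ‖y0 - x‖ ≤ R := by rw [mem_closedBall, dist_eq_norm] at hy0B; exact hy0B
    refine lt_of_le_of_ne hle fun he => ?_
    rw [he] at hmx hlip
    have h1 : q * R ^ 2 ≤ K * R := by nlinarith
    have h2 : q * R ≤ K := by
      have : q * R * R ≤ K * R := by nlinarith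
      exact le_of_mul_le_mul_right this hR
    have h3 : C * R ≤ K * h := by
      have := mul_le_mul_of_nonneg_right h2 hy0.le
      have e : q * R * h = C * R := by rw [hq]; field_simp
      linarith
    nlinarith
  have hyball : y0 ∈ ball x R := by rw [mem_ball, dist_eq_norm]; exact hne
  have hloc : IsLocalMaxOn (fun w => u w - q * ‖w - x‖ ^ 2) Ω y0 := by
    have : IsLocalMax (fun w => u w - q * ‖w - x‖ ^ 2) y0 := by
      filter_upwards [isOpen_ball.mem_nhds hyball] with w hw
      exact hmax (ball_subset_closedBall hw)
    exact this.on Ω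
  have hφ : ContDiff ℝ 1 (fun w : Eu n => q * ‖w - x‖ ^ 2) := contDiff_const.mul (contDiff_sq x)
  have hg := (hasGrad_cmul q (hasGrad_sq x y0)).gradient
  have hp := hH y0 (hRΩ hy0B) _ (hv _ hφ y0 (hRΩ hy0B) hloc)
  rw [hg, smul_smul, norm_smul, Real.norm_of_nonneg (by positivity)] at hp
  refine ⟨y0, hyball, ?_, ?_⟩
  · have : C * (2 * ‖y0 - x‖) ≤ C * h := by
      have := mul_le_mul_of_nonneg_right hp hy0.le
      have e : q * 2 * ‖y0 - x‖ * h = C * (2 * ‖y0 - x‖) := by rw [hq]; field_simp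
      linarith
    have := le_of_mul_le_mul_left this hC
    linarith
  · have e : q * h ^ 2 = C * h := by rw [hq]; field_simp
    have : 0 ≤ q * ‖y0 - x‖ ^ 2 := by positivity
    linarith

lemma visc_local {Ω : Set (Eu n)} (hΩ : IsOpen Ω) {u : Eu n → ℝ} {K : NNReal}
    {H : Eu n → Eu n → ℝ} {C : ℝ} (hC : 0 < C)
    (hu : LipschitzOnWith K u (closure Ω)) (hv : ViscSub H Ω u)
    (hH : ∀ x ∈ Ω, ∀ p, H x p ≤ 0 → ‖p‖ ≤ C) {x : Eu n} (hx : x ∈ Ω) :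
    ∃ h0 > 0, ∀ y, ‖y - x‖ < h0 → u y - u x ≤ 2 * C * ‖y - x‖ := by
  obtain ⟨R, hR, hRΩ⟩ := Metric.nhds_basis_closedBall.mem_iff.1 (hΩ.mem_nhds hx)
  have hK : (0:ℝ) < K + 1 := by positivity
  refine ⟨min R (C * R / (K + 1)), lt_min hR (by positivity), ?_⟩
  have key : ∀ m : ℕ, ∀ y, ‖y - x‖ < min R (C * R / (K + 1)) →
      u y - u x ≤ (2 * C + K / 2 ^ m) * ‖y - x‖ := by
    intro m
    induction m with
    | zero =>
      intro y hy
      have hyR := (lt_min_iff.1 hy).1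
      have hyΩ : y ∈ closure Ω := subset_closure (hRΩ (by
        rw [mem_closedBall, dist_eq_norm]; exact hyR.le))
      have := hu.dist_le_mul y hyΩ x (subset_closure hx)
      rw [Real.dist_eq, dist_eq_norm] at this
      have h2 := (le_abs_self _).trans this
      have : 0 ≤ C * ‖y - x‖ := by positivity
      simp only [pow_zero, div_one]
      nlinarith
    | succ m ih =>
      intro y hy
      rcases eq_or_lt_of_le (norm_nonneg (y - x)) with h0 | h0
      · have : y = x := by simpa [sub_eq_zero] using h0.symm
        subst this; simp
      · obtain ⟨hyR, hyK⟩ := lt_min_iff.1 hy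
        rw [lt_div_iff₀ hK] at hyK
        obtain ⟨y0, _, h1, h2⟩ := visc_local_step hC hu hv hH hR hRΩ h0 hyR.le hyK
        have h3 := ih y0 (by linarith)
        have h4 : (2 * C + K / 2 ^ m) * ‖y0 - x‖ ≤ (2 * C + K / 2 ^ m) * (‖y - x‖ / 2) := by
          gcongr
        have e : (2 * C + K / 2 ^ (m + 1)) * ‖y - x‖
            = C * ‖y - x‖ + (2 * C + K / 2 ^ m) * (‖y - x‖ / 2) := by
          rw [pow_succ]; field_simp; ring
        linarith
  intro y hy
  have ht : Tendsto (fun m : ℕ => (2 * C + K / 2 ^ m) * ‖y - x‖) atTop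
      (𝓝 ((2 * C + 0) * ‖y - x‖)) := by
    refine Tendsto.mul_const _ (Tendsto.const_add _ ?_)
    have := (tendsto_pow_atTop_nhds_zero_of_lt_one (r := (1/2 : ℝ)) (by norm_num)
      (by norm_num)).const_mul (K : ℝ)
    rw [mul_zero] at this
    refine this.congr fun m => ?_
    rw [one_div, inv_pow]; rfl
  rw [add_zero] at ht
  exact ge_of_tendsto' ht fun m => key m y hy

/-- subsolutions are `3C`-Lipschitz along segments -/
lemma visc_segment {Ω : Set (Eu n)} (hΩ : IsOpen Ω) {u : Eu n → ℝ} {K : NNReal}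
    {H : Eu n → Eu n → ℝ} {C : ℝ} (hC : 0 < C)
    (hu : LipschitzOnWith K u (closure Ω)) (hv : ViscSub H Ω u)
    (hH : ∀ x ∈ Ω, ∀ p, H x p ≤ 0 → ‖p‖ ≤ C) {x y : Eu n} (hxy : segment ℝ x y ⊆ Ω) :
    u y - u x ≤ 3 * C * ‖y - x‖ := by
  rcases eq_or_ne x y with rfl | hne
  · simp
  have hd : 0 < ‖y - x‖ := by rw [norm_pos_iff, sub_ne_zero]; exact hne.symm
  have hmem : ∀ t ∈ Icc (0:ℝ) 1, x + t • (y - x) ∈ Ω := fun t ht => hxy (by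
    rw [segment_eq_image']; exact ⟨t, ht, rfl⟩)
  have hc : Continuous (fun t : ℝ => x + t • (y - x)) := by fun_prop
  have := image_le_of_liminf_slope_right_lt_deriv_boundary
    (f := fun t : ℝ => u (x + t • (y - x))) (f' := fun _ => 2 * C * ‖y - x‖) (a := 0) (b := 1)
    (B := fun t => u x + 3 * C * ‖y - x‖ * t) (B' := fun _ => 3 * C * ‖y - x‖)
    (hu.continuousOn.comp hc.continuousOn fun t ht => subset_closure (hmem t ht))
    (by
      intro t ht r hr
      apply Eventually.frequently
      obtain ⟨h0, h0pos, hh⟩ := visc_local hΩ hC hu hv hH (hmem t ⟨ht.1, ht.2.le⟩)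
      have hev : ∀ᶠ s in 𝓝 t, ‖x + s • (y - x) - (x + t • (y - x))‖ < h0 := by
        have : Continuous fun s : ℝ => ‖x + s • (y - x) - (x + t • (y - x))‖ := by fun_prop
        refine this.continuousAt.eventually_lt continuousAt_const ?_
        simpa using h0pos
      filter_upwards [self_mem_nhdsWithin, nhdsWithin_le_nhds hev] with s hs hs2
      have hs' : 0 < s - t := sub_pos.2 hs
      have h1 := hh _ hs2
      have e : x + s • (y - x) - (x + t • (y - x)) = (s - t) • (y - x) := by module
      rw [e, norm_smul, Real.norm_of_nonneg hs'.le] at h1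
      rw [slope_def_field]
      refine lt_of_le_of_lt ?_ hr
      rw [div_le_iff₀ hs']
      linarith)
    (by simp)
    (by
      intro t
      have h9 := ((hasDerivAt_id t).const_mul (3 * C * ‖y - x‖)).const_add (u x)
      rw [mul_one] at h9
      exact h9)
    (by
      intro t _ _
      have : 0 < C * ‖y - x‖ := by positivity
      linarith)
    (show (1:ℝ) ∈ Icc 0 1 by simp)
  simp only [one_smul, add_sub_cancel, mul_one] at this
  linarith


/-- Lipschitz along segments in `Ω`. -/
def SegLip (Ω : Set (Eu n)) (C : ℝ) (u : Eu n → ℝ) : Prop :=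
  ∀ x y, segment ℝ x y ⊆ Ω → u y - u x ≤ C * ‖y - x‖

lemma seg_push {Ω : Set (Eu n)} {ρ : Eu n → ℝ} (hΩ : Ω = {x | ρ x < 0}) {g z : Eu n} {r : ℝ}
    (hg : g ≠ 0)
    (hstr : ∀ w ∈ ball z r, ∀ w' ∈ ball z r,
      |ρ w - ρ w' - inner ℝ g (w - w')| ≤ ‖g‖ / 2 * ‖w - w'‖)
    {x v : Eu n} {t : ℝ} (hx : x ∈ Ω) (hxr : x ∈ ball z r)
    (hv : 3 * ‖v‖ ≤ t)
    (hr : x + (v - (t / ‖g‖) • g) ∈ ball z r) : x + (v - (t / ‖g‖) • g) ∈ Ω := by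
  have hgp : 0 < ‖g‖ := norm_pos_iff.2 hg
  have ht : 0 ≤ t := by have := norm_nonneg v; linarith
  have h := (abs_le.1 (hstr _ hr _ hxr)).2
  rw [add_sub_cancel_left, inner_sub_right, inner_smul_right, real_inner_self_eq_norm_sq] at h
  have h1 := (abs_le.1 (abs_real_inner_le_norm g v)).2
  have h2 : ‖v - (t / ‖g‖) • g‖ ≤ ‖v‖ + t := by
    refine (norm_sub_le _ _).trans ?_
    rw [norm_smul, Real.norm_of_nonneg (by positivity)]
    apply le_of_eq; field_simp
  have h3 : t / ‖g‖ * ‖g‖ ^ 2 = t * ‖g‖ := by field_simp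
  have h4 : ‖g‖ / 2 * ‖v - (t / ‖g‖) • g‖ ≤ ‖g‖ / 2 * (‖v‖ + t) := by gcongr
  have hx' : ρ x < 0 := by rw [hΩ] at hx; exact hx
  have h5 : ‖g‖ * (3 * ‖v‖) ≤ ‖g‖ * t := by gcongr
  rw [hΩ]
  change ρ _ < 0
  linarith

lemma local_quasi_bdry {Ω : Set (Eu n)} {ρ : Eu n → ℝ} (hρ : ContDiff ℝ 1 ρ)
    (hΩ : Ω = {x | ρ x < 0}) {z : Eu n} (hg : gradient ρ z ≠ 0) :
    ∃ r > 0, ∀ C ≥ 0, ∀ u, SegLip Ω C u → ∀ x ∈ ball z r ∩ Ω, ∀ y ∈ ball z r ∩ Ω,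
      u y - u x ≤ 9 * C * ‖y - x‖ := by
  set g := gradient ρ z with hgdef
  have hgp : 0 < ‖g‖ := norm_pos_iff.2 hg
  have hs : HasStrictFDerivAt ρ (fderiv ℝ ρ z) z := hρ.contDiffAt.hasStrictFDerivAt (by norm_num)
  have hlo := hs.isLittleO.def (show 0 < ‖g‖ / 2 by positivity)
  obtain ⟨r, hr, hball⟩ := Metric.eventually_nhds_iff.1 hlo
  have hfd : ∀ v, fderiv ℝ ρ z v = inner ℝ g v := by
    intro v
    simp [hgdef, gradient]
  have hstr : ∀ w ∈ ball z r, ∀ w' ∈ ball z r,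
      |ρ w - ρ w' - inner ℝ g (w - w')| ≤ ‖g‖ / 2 * ‖w - w'‖ := by
    intro w hw w' hw'
    have := @hball (w, w') (by rw [Prod.dist_eq]; exact max_lt hw hw')
    rw [← hfd]
    exact this
  refine ⟨r / 12, by positivity, ?_⟩
  intro C hC u hu x ⟨hxr, hx⟩ y ⟨hyr, hy⟩
  rcases eq_or_ne x y with rfl | hne
  · simp
  set h := ‖y - x‖ with hh
  have hd : 0 < h := by rw [hh, norm_pos_iff, sub_ne_zero]; exact hne.symm
  rw [mem_ball, dist_eq_norm] at hxr hyr
  have hh2 : h < r / 6 := by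
    have : ‖y - x‖ ≤ ‖y - z‖ + ‖x - z‖ := by
      rw [show y - x = (y - z) - (x - z) by abel]; exact norm_sub_le _ _
    linarith
  set e : Eu n := (4 * h / ‖g‖) • g with he
  have hen : ‖e‖ = 4 * h := by
    rw [he, norm_smul, Real.norm_of_nonneg (by positivity)]; field_simp
  have hsmall : ∀ (x v : Eu n) (t : ℝ), ‖x - z‖ < r / 12 → 0 ≤ t → t ≤ 4 * h → ‖v‖ ≤ h →
      x + (v - (t / ‖g‖) • g) ∈ ball z r := by
    intro x v t hx ht ht4 hv
    rw [mem_ball, dist_eq_norm]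
    have e1 : x + (v - (t / ‖g‖) • g) - z = (x - z) + (v - (t / ‖g‖) • g) := by abel
    have e2 : ‖(t / ‖g‖) • g‖ = t := by
      rw [norm_smul, Real.norm_of_nonneg (by positivity)]; field_simp
    have h1 := norm_add_le (x - z) (v - (t / ‖g‖) • g)
    have h2 := norm_sub_le v ((t / ‖g‖) • g)
    rw [e1]; linarith
  have hb12 : ∀ x : Eu n, ‖x - z‖ < r / 12 → x ∈ ball z r := fun x hx => by
    rw [mem_ball, dist_eq_norm]; linarith
  -- the three segments
  have s1 : ∀ x : Eu n, ‖x - z‖ < r / 12 → x ∈ Ω → segment ℝ x (x - e) ⊆ Ω := by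
    intro x hxr hx w hw
    rw [segment_eq_image'] at hw
    obtain ⟨τ, ⟨hτ0, hτ1⟩, rfl⟩ := hw
    have e1 : x + τ • (x - e - x) = x + ((0 : Eu n) - (τ * (4 * h) / ‖g‖) • g) := by
      rw [he, mul_div_assoc]; module
    simp only [e1]
    refine seg_push hΩ hg hstr hx (hb12 x hxr) (by simp; positivity)
      (hsmall x 0 _ hxr (by positivity) (by nlinarith) (by simpa using hd.le))
  have s2 : segment ℝ (x - e) (y - e) ⊆ Ω := by
    intro w hw
    rw [segment_eq_image'] at hw
    obtain ⟨τ, ⟨hτ0, hτ1⟩, rfl⟩ := hw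
    have e1 : x - e + τ • (y - e - (x - e)) = x + (τ • (y - x) - (4 * h / ‖g‖) • g) := by
      rw [he]; module
    have e2 : ‖τ • (y - x)‖ ≤ h := by
      rw [norm_smul, Real.norm_of_nonneg hτ0, ← hh]; nlinarith
    simp only [e1]
    exact seg_push hΩ hg hstr hx (hb12 x hxr) (by linarith)
      (hsmall x _ _ hxr (by positivity) le_rfl e2)
  have b1 := hu _ _ (s1 x hxr hx)
  have b2 := hu _ _ s2
  have b3 := hu _ _ (by rw [segment_symm]; exact s1 y hyr hy)
  rw [show x - e - x = -e by abel, norm_neg, hen] at b1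
  rw [show y - e - (x - e) = y - x by abel, ← hh] at b2
  rw [show y - (y - e) = e by abel, hen] at b3
  nlinarith

lemma local_quasi {Ω : Set (Eu n)} (hop : IsOpen Ω) {ρ : Eu n → ℝ} (hρ : ContDiff ℝ 1 ρ)
    (hΩ : Ω = {x | ρ x < 0}) (hg : ∀ z ∈ frontier Ω, gradient ρ z ≠ 0) {z : Eu n}
    (hz : z ∈ closure Ω) :
    ∃ r > 0, ∀ C ≥ 0, ∀ u, SegLip Ω C u → ∀ x ∈ ball z r ∩ Ω, ∀ y ∈ ball z r ∩ Ω,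
      u y - u x ≤ 9 * C * ‖y - x‖ := by
  by_cases hzΩ : z ∈ Ω
  · obtain ⟨r, hr, hb⟩ := Metric.isOpen_iff.1 hop z hzΩ
    refine ⟨r, hr, fun C hC u hu x hx y hy => ?_⟩
    have := hu x y (((convex_ball z r).segment_subset hx.1 hy.1).trans hb)
    have h2 : 0 ≤ C * ‖y - x‖ := by positivity
    linarith
  · exact local_quasi_bdry hρ hΩ (hg z (by rw [hop.frontier_eq]; exact ⟨hz, hzΩ⟩))

lemma segLip_uniform {Ω : Set (Eu n)} (hop : IsOpen Ω) (hbd : Bornology.IsBounded Ω)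
    {ρ : Eu n → ℝ} (hρ : ContDiff ℝ 1 ρ)
    (hΩ : Ω = {x | ρ x < 0}) (hg : ∀ z ∈ frontier Ω, gradient ρ z ≠ 0)
    (hconn : IsPreconnected Ω) (h0 : (0 : Eu n) ∈ Ω) (C : ℝ) (hC : 0 ≤ C) :
    ∃ L : NNReal, ∀ u, SegLip Ω C u → u 0 = 0 → LipschitzOnWith L u Ω := by
  have hcpt : IsCompact (closure Ω) := hbd.isCompact_closure
  choose! r hr hloc using fun z (hz : z ∈ closure Ω) => local_quasi hop hρ hΩ hg hz
  obtain ⟨d, hd, hleb⟩ := lebesgue_number_lemma_of_metric (ι := closure Ω)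
    (c := fun z => ball (z : Eu n) (r z)) hcpt (fun _ => isOpen_ball)
    (fun z hz => mem_iUnion.2 ⟨⟨z, hz⟩, mem_ball_self (hr z hz)⟩)
  have hnear : ∀ u, SegLip Ω C u → ∀ x ∈ Ω, ∀ y ∈ Ω, ‖y - x‖ < d →
      |u y - u x| ≤ 9 * C * ‖y - x‖ := by
    intro u hu x hx y hy hxy
    obtain ⟨i, hi⟩ := hleb x (subset_closure hx)
    have hx' : x ∈ ball (i : Eu n) (r i) := hi (mem_ball_self hd)
    have hy' : y ∈ ball (i : Eu n) (r i) := hi (by rw [mem_ball, dist_eq_norm]; exact hxy)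
    have h1 := hloc i i.2 C hC u hu x ⟨hx', hx⟩ y ⟨hy', hy⟩
    have h2 := hloc i i.2 C hC u hu y ⟨hy', hy⟩ x ⟨hx', hx⟩
    rw [norm_sub_rev] at h2
    rw [abs_le]; constructor <;> linarith
  set G : Set (Eu n) := {x | x ∈ Ω ∧ ∃ N : ℝ, ∀ u, SegLip Ω C u → u 0 = 0 → |u x| ≤ N} with hG
  have hstep : ∀ x ∈ G, ∀ y ∈ Ω, ‖y - x‖ < d → y ∈ G := by
    rintro x ⟨hx, N, hN⟩ y hy hxy
    refine ⟨hy, N + 9 * C * d, fun u hu hu0 => ?_⟩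
    have h1 := hnear u hu x hx y hy hxy
    have h2 := hN u hu hu0
    have h3 : 9 * C * ‖y - x‖ ≤ 9 * C * d := by gcongr
    have h4 : |u y| ≤ |u y - u x| + |u x| := by
      simpa using abs_add_le (u y - u x) (u x)
    linarith
  have hGΩ : Ω ⊆ G := by
    refine hconn.subset_of_closure_inter_subset ?_ ⟨0, h0, h0, 0, fun u _ hu0 => by simp [hu0]⟩ ?_
    · rw [isOpen_iff_mem_nhds]
      intro x hx
      filter_upwards [hop.mem_nhds hx.1, ball_mem_nhds x hd] with y hy hyd
      exact hstep x hx y hy (by rw [mem_ball, dist_eq_norm] at hyd; exact hyd)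
    · rintro y ⟨hy1, hy2⟩
      obtain ⟨x, hx, hxy⟩ := Metric.mem_closure_iff.1 hy1 d hd
      exact hstep x hx y hy2 (by rwa [dist_eq_norm] at hxy)
  choose! N hN using fun x (hx : x ∈ Ω) => (hGΩ hx).2
  obtain ⟨t, htΩ, htf, htc⟩ := exists_finite_cover_balls_of_isCompact_closure hcpt hd
  obtain ⟨B, hB⟩ := (htf.image N).bddAbove
  have hbound : ∀ u, SegLip Ω C u → u 0 = 0 → ∀ x ∈ Ω, |u x| ≤ B + 9 * C * d := by
    intro u hu hu0 x hx
    obtain ⟨w, hw, hxw⟩ := mem_iUnion₂.1 (htc hx)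
    rw [mem_ball, dist_eq_norm] at hxw
    have h1 := hnear u hu w (htΩ hw) x hx hxw
    have h2 := hN w (htΩ hw) u hu hu0
    have h3 : 9 * C * ‖x - w‖ ≤ 9 * C * d := by gcongr
    have h4 : |u x| ≤ |u x - u w| + |u w| := by
      simpa using abs_add_le (u x - u w) (u w)
    have h5 : N w ≤ B := hB ⟨w, hw, rfl⟩
    linarith
  set B' := |B| + 9 * C * d
  refine ⟨Real.toNNReal (9 * C + 2 * B' / d), fun u hu hu0 => ?_⟩
  have hB'0 : 0 ≤ B' := by positivity
  refine LipschitzOnWith.of_dist_le_mul fun y hy x hx => ?_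
  rw [Real.coe_toNNReal _ (by positivity), Real.dist_eq, dist_eq_norm]
  have hq : 0 ≤ 2 * B' / d * ‖y - x‖ := by positivity
  have hq2 : 0 ≤ 9 * C * ‖y - x‖ := by positivity
  rcases lt_or_ge ‖y - x‖ d with hlt | hge
  · have := hnear u hu x hx y hy hlt
    nlinarith
  · have h1 := hbound u hu hu0 x hx
    have h2 := hbound u hu hu0 y hy
    have h3 := abs_sub (u y) (u x)
    have h4 := le_abs_self B
    have h5 : 2 * B' ≤ 2 * B' / d * ‖y - x‖ := by
      rw [div_mul_eq_mul_div, le_div_iff₀ hd]; gcongr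
    have h6 : B + 9 * C * d ≤ B' := by simp only [B']; linarith
    nlinarith

/-- forward invariance gives connectedness -/
lemma omega_preconnected {Ω : Set (Eu n)} (hop : IsOpen Ω)
    {ρ : Eu n → ℝ} (hρ : ContDiff ℝ 1 ρ)
    (hΩ : Ω = {x | ρ x < 0}) (h0 : (0 : Eu n) ∈ Ω) {b : Eu n → Eu n}
    (hin : ∀ x ∈ frontier Ω, inner ℝ (b x) (gradient ρ x) < 0)
    {X : ℝ → Eu n → Eu n} (hX : GAS b X) : IsPreconnected Ω := by
  obtain ⟨hX0, hXd, hXt, -⟩ := hX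
  have hXc : ∀ x, Continuous fun t => X t x := fun x =>
    continuous_iff_continuousAt.2 fun t => (hXd x t).continuousAt
  have hinv : ∀ x ∈ Ω, ∀ t ≥ 0, X t x ∈ Ω := by
    intro x hx T hT
    by_contra hcon
    set S : Set ℝ := {t | 0 ≤ t ∧ X t x ∉ Ω} with hS
    have hScl : IsClosed S := by
      have : S = Ici 0 ∩ (fun t => X t x) ⁻¹' Ωᶜ := by ext; simp [hS]
      rw [this]
      exact isClosed_Ici.inter (hop.isClosed_compl.preimage (hXc x))
    have hSbb : BddBelow S := ⟨0, fun t ht => ht.1⟩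
    have hmem : sInf S ∈ S := hScl.csInf_mem ⟨T, hT, hcon⟩ hSbb
    set s := sInf S
    have hs0 : 0 < s := by
      refine lt_of_le_of_ne hmem.1 fun h => hmem.2 ?_
      rw [← h, hX0]; exact hx
    have hbefore : ∀ t, 0 ≤ t → t < s → X t x ∈ Ω := by
      intro t ht hts
      by_contra hc
      exact absurd (csInf_le hSbb (show t ∈ S from ⟨ht, hc⟩)) (not_le.2 hts)
    have hev : ∀ᶠ t in 𝓝[<] s, X t x ∈ Ω := by
      filter_upwards [Ioo_mem_nhdsLT hs0] with t ht using hbefore t ht.1.le ht.2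
    have hcl : X s x ∈ closure Ω :=
      mem_closure_of_tendsto ((hXc x).continuousAt.mono_left nhdsWithin_le_nhds) hev
    have hfr : X s x ∈ frontier Ω := by rw [hop.frontier_eq]; exact ⟨hcl, hmem.2⟩
    have hder : HasDerivAt (fun t => ρ (X t x)) (inner ℝ (gradient ρ (X s x)) (b (X s x))) s := by
      have h1 := (c1_hasGrad hρ (X s x))
      rw [hasGradientAt_iff_hasFDerivAt] at h1
      have h2 := h1.comp_hasDerivAt s (hXd x s)
      rw [InnerProductSpace.toDual_apply_apply] at h2
      exact h2
    have hneg := hin _ hfr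
    rw [real_inner_comm] at hneg
    have hρs : 0 ≤ ρ (X s x) := by
      have := hmem.2
      rw [hΩ] at this
      exact not_lt.1 this
    have hsl := (hasDerivAt_iff_tendsto_slope.1 hder).mono_left
      (nhdsWithin_mono s (show Iio s ⊆ {s}ᶜ from fun t ht => ne_of_lt ht))
    have hsl2 := hsl.eventually (gt_mem_nhds hneg)
    obtain ⟨t, ht1, ht2, ht3⟩ := (hsl2.and (hev.and self_mem_nhdsWithin)).exists
    rw [slope_def_field] at ht1
    have ht3' : t - s < 0 := sub_neg.2 ht3
    rw [div_lt_iff_of_neg ht3', zero_mul] at ht1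
    rw [hΩ] at ht2
    have : ρ (X t x) < 0 := ht2
    linarith
  obtain ⟨r, hr, hb⟩ := Metric.isOpen_iff.1 hop 0 h0
  refine isPreconnected_of_forall 0 fun x hx => ?_
  obtain ⟨T, hT⟩ := ((hXt x).eventually (ball_mem_nhds 0 hr)).and (eventually_ge_atTop 0) |>.exists
  refine ⟨(fun t => X t x) '' Icc 0 T ∪ ball 0 r, ?_, Or.inr (mem_ball_self hr),
    Or.inl ⟨0, ⟨le_rfl, hT.2⟩, hX0 x⟩, ?_⟩
  · rintro y (⟨t, ht, rfl⟩ | hy)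
    · exact hinv x hx t ht.1
    · exact hb hy
  · exact IsPreconnected.union (X T x) ⟨T, ⟨hT.2, le_rfl⟩, rfl⟩ hT.1
      (isPreconnected_Icc.image _ (hXc x).continuousOn) (convex_ball 0 r).isPreconnected


/-- admissible functions in the definition of the quasi-potential -/
def Adm (α : Eu n → Matrix (Fin n) (Fin n) ℝ) (b : Eu n → Eu n) (Ω : Set (Eu n))
    (u : Eu n → ℝ) : Prop :=
  (∃ K : NNReal, LipschitzOnWith K u (closure Ω)) ∧ u 0 = 0 ∧ ViscSub (Ham α b) Ω u

lemma adm_lip {Ω : Set (Eu n)} (hop : IsOpen Ω) (hbd : Bornology.IsBounded Ω)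
    {ρ : Eu n → ℝ} (hρ : ContDiff ℝ 1 ρ)
    (hΩ : Ω = {x | ρ x < 0}) (hg : ∀ z ∈ frontier Ω, gradient ρ z ≠ 0)
    (hconn : IsPreconnected Ω) (h0 : (0 : Eu n) ∈ Ω) {b : Eu n → Eu n} (hb : Continuous b)
    {θ : ℝ} (hθ : 0 < θ) :
    ∃ L : NNReal, ∀ α : Eu n → Matrix (Fin n) (Fin n) ℝ,
      (∀ x ∈ Ω, ∀ p, θ * ‖p‖ ^ 2 ≤ mquad (α x) p) → ∀ u, Adm α b Ω u →
      LipschitzOnWith L u (closure Ω) := by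
  obtain ⟨B, hB⟩ := hbd.isCompact_closure.exists_bound_of_continuousOn hb.continuousOn
  set C : ℝ := (|B| + 1) / θ with hCdef
  have hC : 0 < C := by positivity
  obtain ⟨L, hL⟩ := segLip_uniform hop hbd hρ hΩ hg hconn h0 (3 * C) (by positivity)
  refine ⟨L, fun α hα u hu => ?_⟩
  obtain ⟨⟨K, hK⟩, hu0, hv⟩ := hu
  have hH : ∀ x ∈ Ω, ∀ p, Ham α b x p ≤ 0 → ‖p‖ ≤ C := fun x hx p hp =>
    ham_coercive hθ (hα x hx p)
      ((hB x (subset_closure hx)).trans ((le_abs_self B).trans (by linarith))) hp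
  have hseg : SegLip Ω (3 * C) u := fun x y hxy => visc_segment hop hC hK hv hH hxy
  exact (lipschitzOnWith_closure_iff hK.continuousOn).2 (hL u hseg hu0)

section Vq
variable {α : Eu n → Matrix (Fin n) (Fin n) ℝ} {b : Eu n → Eu n} {Ω : Set (Eu n)} {L : NNReal}

lemma Vq_bdd (h0 : (0 : Eu n) ∈ Ω) (hL : ∀ u, Adm α b Ω u → LipschitzOnWith L u (closure Ω))
    {x : Eu n} (hx : x ∈ closure Ω) :
    BddAbove {r | ∃ u : Eu n → ℝ, (∃ K : NNReal, LipschitzOnWith K u (closure Ω)) ∧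
    u 0 = 0 ∧ ViscSub (Ham α b) Ω u ∧ r = u x} := by
  refine ⟨L * ‖x‖, ?_⟩
  rintro r ⟨u, h1, h2, h3, rfl⟩
  have := (hL u ⟨h1, h2, h3⟩).dist_le_mul x hx 0 (subset_closure h0)
  rw [Real.dist_eq, h2, dist_eq_norm, sub_zero, sub_zero] at this
  exact (le_abs_self _).trans this

lemma adm_le_Vq (h0 : (0 : Eu n) ∈ Ω) (hL : ∀ u, Adm α b Ω u → LipschitzOnWith L u (closure Ω))
    {x : Eu n} (hx : x ∈ closure Ω) {u : Eu n → ℝ} (hu : Adm α b Ω u) : u x ≤ Vq α b Ω x :=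
  le_csSup (Vq_bdd h0 hL hx) ⟨u, hu.1, hu.2.1, hu.2.2, rfl⟩

lemma ham_zero (x : Eu n) : Ham α b x 0 = 0 := by
  simp [Ham, mquad, dotp]

lemma adm_zero (hop : IsOpen Ω) : Adm α b Ω (fun _ => 0) := by
  refine ⟨⟨0, (LipschitzWith.const (0:ℝ)).lipschitzOnWith⟩, rfl, fun φ hφ x hx hmax => ?_⟩
  have h1 : IsLocalMax (fun y => 0 - φ y) x := hmax.isLocalMax (hop.mem_nhds hx)
  have h2 : HasGradientAt (fun y => 0 - φ y) ((0 : Eu n) - gradient φ x) x :=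
    hasGrad_sub (hasGradientAt_const x 0) (c1_hasGrad hφ x)
  have h3 := hasGrad_eq_zero h2 h1
  rw [zero_sub, neg_eq_zero] at h3
  rw [h3, ham_zero]

lemma Vq_le (hop : IsOpen Ω) {x : Eu n} {c : ℝ} (h : ∀ u, Adm α b Ω u → u x ≤ c) :
    Vq α b Ω x ≤ c := by
  have hz : Adm α b Ω (fun _ => 0) := adm_zero hop
  refine csSup_le ⟨0, fun _ => 0, hz.1, rfl, hz.2.2, rfl⟩ ?_
  rintro r ⟨u, h1, h2, h3, rfl⟩
  exact h u ⟨h1, h2, h3⟩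

lemma exists_adm_lt (hop : IsOpen Ω) {x : Eu n} {c : ℝ} (h : c < Vq α b Ω x) :
    ∃ u, Adm α b Ω u ∧ c < u x := by
  by_contra hc
  push Not at hc
  exact absurd (Vq_le hop hc) (not_le.2 h)

lemma Vq_nonneg (hop : IsOpen Ω) (h0 : (0 : Eu n) ∈ Ω)
    (hL : ∀ u, Adm α b Ω u → LipschitzOnWith L u (closure Ω))
    {x : Eu n} (hx : x ∈ closure Ω) : 0 ≤ Vq α b Ω x :=
  adm_le_Vq h0 hL hx (adm_zero hop)

lemma Vq_zero (hop : IsOpen Ω) (h0 : (0 : Eu n) ∈ Ω)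
    (hL : ∀ u, Adm α b Ω u → LipschitzOnWith L u (closure Ω)) : Vq α b Ω 0 = 0 :=
  le_antisymm (Vq_le hop fun _ hu => hu.2.1.le) (Vq_nonneg hop h0 hL (subset_closure h0))

lemma Vq_lip (hop : IsOpen Ω) (h0 : (0 : Eu n) ∈ Ω)
    (hL : ∀ u, Adm α b Ω u → LipschitzOnWith L u (closure Ω)) :
    LipschitzOnWith L (Vq α b Ω) (closure Ω) := by
  refine LipschitzOnWith.of_le_add_mul L fun x hx y hy => Vq_le hop fun u hu => ?_
  have h1 := (hL u hu).dist_le_mul x hx y hy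
  have h2 := adm_le_Vq h0 hL hy hu
  rw [Real.dist_eq] at h1
  have := (le_abs_self _).trans h1
  linarith

lemma Vq_mono {α' : Eu n → Matrix (Fin n) (Fin n) ℝ} (hop : IsOpen Ω) (h0 : (0 : Eu n) ∈ Ω)
    (hL : ∀ u, Adm α b Ω u → LipschitzOnWith L u (closure Ω))
    (h : ∀ x ∈ Ω, ∀ p, mquad (α x) p ≤ mquad (α' x) p) {x : Eu n} (hx : x ∈ closure Ω) :
    Vq α' b Ω x ≤ Vq α b Ω x := by
  refine Vq_le hop fun u hu => adm_le_Vq h0 hL hx ⟨hu.1, hu.2.1, fun φ hφ y hy hm => ?_⟩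
  have h1 := hu.2.2 φ hφ y hy hm
  have h2 := h y hy (gradient φ y)
  unfold Ham at *
  linarith

end Vq

/-- stability of subsolutions -/
lemma stab {ι : Type*} {l : Filter ι} [NeBot l] {Ω : Set (Eu n)} (hop : IsOpen Ω)
    {α : Eu n → Matrix (Fin n) (Fin n) ℝ} {b : Eu n → Eu n} (hα : ContinuousOn α Ω)
    (hb : Continuous b) {u : ι → Eu n → ℝ} {W : Eu n → ℝ} {t : ι → ℝ}
    (ht : Tendsto t l (𝓝 0)) {L : NNReal}
    (hL : ∀ᶠ i in l, LipschitzOnWith L (u i) (closure Ω)) {x : Eu n} (hx : x ∈ Ω)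
    (hWlip : LipschitzOnWith L W (closure Ω))
    (hWx : ∀ ε > 0, ∀ᶠ i in l, W x - ε < u i x)
    (hWy : ∀ y ∈ Ω, ∀ ε > 0, ∀ᶠ i in l, u i y < W y + ε)
    (hvisc : ∃ r > 0, ∀ᶠ i in l, ∀ y ∈ ball x r, y ∈ Ω → ∀ φ : Eu n → ℝ, ContDiff ℝ 1 φ →
      IsLocalMaxOn (fun w => u i w - φ w) Ω y →
      Ham α b y (gradient φ y) - t i * ‖gradient φ y‖ ^ 2 ≤ 0)
    {φ : Eu n → ℝ} (hφ : ContDiff ℝ 1 φ) (hmax : IsLocalMaxOn (fun w => W w - φ w) Ω x) :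
    Ham α b x (gradient φ x) ≤ 0 := by
  by_contra hcon
  rw [not_le] at hcon
  set Q : Eu n → Eu n := fun y => gradient φ y + (2:ℝ) • (y - x) with hQ
  have hQc : Continuous Q := (c1_grad_cont hφ).add (by fun_prop)
  have hQx : Q x = gradient φ x := by simp [hQ]
  have hF : ContinuousAt (fun q : Eu n × ℝ => Ham α b q.1 (Q q.1) - q.2 * ‖Q q.1‖ ^ 2) (x, 0) := by
    have hα' : ContinuousAt (fun q : Eu n × ℝ => α q.1) (x, 0) :=
      ContinuousAt.comp (f := Prod.fst) (x := ((x, 0) : Eu n × ℝ))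
        (hα.continuousAt (hop.mem_nhds hx)) continuousAt_fst
    have hQ' : Continuous (fun q : Eu n × ℝ => Q q.1) := hQc.comp continuous_fst
    have hm : ContinuousAt (fun q : Eu n × ℝ => mquad (α q.1) (Q q.1)) (x, 0) :=
      ContinuousAt.comp (f := fun q : Eu n × ℝ => (α q.1, Q q.1)) (x := ((x, 0) : Eu n × ℝ))
        mquad_cont.continuousAt (hα'.prodMk hQ'.continuousAt)
    have hd : Continuous (fun q : Eu n × ℝ => dotp (b q.1) (Q q.1)) := by
      simp only [dotp_eq]
      exact (hb.comp continuous_fst).inner hQ'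
    unfold Ham
    exact (hm.add hd.continuousAt).sub
      (continuousAt_snd.mul ((hQ'.norm.pow 2).continuousAt))
  have hFe := hF.eventually (lt_mem_nhds (show 0 < Ham α b x (Q x) - 0 * ‖Q x‖ ^ 2 by
    rw [hQx]; simpa using hcon))
  obtain ⟨ε1, hε1, hFb⟩ := Metric.eventually_nhds_iff.1 hFe
  obtain ⟨r, hr, hvis⟩ := hvisc
  have hmax' : IsLocalMax (fun w => W w - φ w) x := hmax.isLocalMax (hop.mem_nhds hx)
  obtain ⟨R, hR, hRs⟩ := Metric.eventually_nhds_iff.1 (hmax'.and (hop.mem_nhds hx))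
  set ε := min ε1 (min r R) / 2 with hε
  have hεpos : 0 < ε := by positivity
  have hεe : ε < ε1 := by
    have := min_le_left ε1 (min r R); have : 0 < min ε1 (min r R) := by positivity
    linarith
  have hεr : ε < r := by
    have := (min_le_right ε1 (min r R)).trans (min_le_left r R)
    have : 0 < min ε1 (min r R) := by positivity
    linarith
  have hεR : ε < R := by
    have := (min_le_right ε1 (min r R)).trans (min_le_right r R)
    have : 0 < min ε1 (min r R) := by positivity
    linarith
  have hcb : ∀ y ∈ closedBall x ε, W y - φ y ≤ W x - φ x ∧ y ∈ Ω := fun y hy =>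
    hRs (lt_of_le_of_lt hy hεR)
  set e : ℝ := ε ^ 2 / (8 * (L + 1)) with he
  have hepos : 0 < e := by positivity
  have hLe : L * e ≤ ε ^ 2 / 8 := by
    have : (L + 1) * e = ε ^ 2 / 8 := by rw [he]; field_simp
    nlinarith
  obtain ⟨s, hsS, hsf, hsc⟩ := (isCompact_sphere x ε).finite_cover_balls hepos
  have hev1 : ∀ᶠ i in l, ∀ w ∈ s, u i w < W w + ε ^ 2 / 8 :=
    (Filter.eventually_all_finite hsf).2 fun w hw =>
      hWy w (hcb w (sphere_subset_closedBall (hsS hw))).2 _ (by positivity)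
  have hev2 := hWx (ε ^ 2 / 4) (by positivity)
  have hev3 : ∀ᶠ i in l, |t i| < ε1 := by
    have := ht.abs
    rw [abs_zero] at this
    exact this.eventually (gt_mem_nhds hε1)
  obtain ⟨i, hi1, hi2, hi3, hi4, hiL⟩ :=
    (hev1.and (hev2.and (hev3.and (hvis.and hL)))).exists
  have hsph : ∀ y ∈ sphere x ε, u i y < W y + ε ^ 2 / 2 := by
    intro y hy
    obtain ⟨w, hw, hyw⟩ := mem_iUnion₂.1 (hsc hy)
    have hyΩ := subset_closure (hcb y (sphere_subset_closedBall hy)).2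
    have hwΩ := subset_closure (hcb w (sphere_subset_closedBall (hsS hw))).2
    have h1 := hiL.dist_le_mul y hyΩ w hwΩ
    have h2 := hWlip.dist_le_mul w hwΩ y hyΩ
    rw [mem_ball] at hyw
    rw [Real.dist_eq] at h1 h2
    rw [dist_comm] at h2
    have h3 : L * dist y w ≤ L * e := by gcongr
    have h4 := (le_abs_self _).trans h1
    have h5 := (le_abs_self _).trans h2
    have h6 := hi1 w hw
    have : 0 < ε ^ 2 := by positivity
    linarith
  set ψ : Eu n → ℝ := fun w => φ w + ‖w - x‖ ^ 2 with hψ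
  have hψc : ContDiff ℝ 1 ψ := hφ.add (contDiff_sq x)
  have hcont : ContinuousOn (fun w => u i w - ψ w) (closedBall x ε) :=
    (hiL.continuousOn.mono fun y hy => subset_closure (hcb y hy).2).sub hψc.continuous.continuousOn
  have hxB : x ∈ closedBall x ε := mem_closedBall_self hεpos.le
  obtain ⟨y, hyB, hym⟩ := (isCompact_closedBall x ε).exists_isMaxOn ⟨x, hxB⟩ hcont
  have hyb : y ∈ ball x ε := by
    rw [mem_ball]
    refine lt_of_le_of_ne hyB fun hd => ?_
    have h1 := hsph y hd
    have h2 := hym hxB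
    have h3 := (hcb y hyB).1
    have h4 : ‖y - x‖ = ε := by rw [← dist_eq_norm]; exact hd
    simp only [hψ, mem_ofPred_eq, sub_self, norm_zero, h4] at h2
    nlinarith
  have hloc : IsLocalMaxOn (fun w => u i w - ψ w) Ω y := by
    have : IsLocalMax (fun w => u i w - ψ w) y := by
      filter_upwards [isOpen_ball.mem_nhds hyb] with w hw
      exact hym (ball_subset_closedBall hw)
    exact this.on Ω
  have hgr : gradient ψ y = Q y := (hasGrad_add (c1_hasGrad hφ y) (hasGrad_sq x y)).gradient
  have hfin := hi4 y (ball_subset_ball hεr.le hyb) (hcb y hyB).2 ψ hψc hloc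
  rw [hgr] at hfin
  have hpos := @hFb (y, t i) (by
    rw [Prod.dist_eq]
    refine max_lt (lt_of_le_of_lt hyB hεe) ?_
    rw [Real.dist_eq, sub_zero]; exact hi3)
  exact absurd hfin (not_le.2 hpos)

/-- the quasi-potential is itself a subsolution -/
lemma Vq_visc {Ω : Set (Eu n)} {α : Eu n → Matrix (Fin n) (Fin n) ℝ} {b : Eu n → Eu n}
    {L : NNReal} (hop : IsOpen Ω) (h0 : (0 : Eu n) ∈ Ω) (hα : ContinuousOn α Ω) (hb : Continuous b)
    (hL : ∀ u, Adm α b Ω u → LipschitzOnWith L u (closure Ω)) :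
    ViscSub (Ham α b) Ω (Vq α b Ω) := by
  intro φ hφ x hx hmax
  have hsub : ∀ k : ℕ, Vq α b Ω x - 1 / ((k : ℝ) + 1) < Vq α b Ω x := fun k => by
    have : 0 < 1 / ((k : ℝ) + 1) := by positivity
    linarith
  choose u hu hux using fun k : ℕ => exists_adm_lt hop (hsub k)
  refine stab (l := atTop) hop hα hb (u := u) (W := Vq α b Ω) (t := fun _ => 0)
    tendsto_const_nhds (Eventually.of_forall fun k => hL _ (hu k)) hx (Vq_lip hop h0 hL) ?_ ?_ ?_
    hφ hmax
  · intro ε hε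
    have := (tendsto_one_div_add_atTop_nhds_zero_nat (𝕜 := ℝ)).eventually (gt_mem_nhds hε)
    filter_upwards [this] with k hk
    have := hux k
    linarith
  · intro y hy ε hε
    refine Eventually.of_forall fun k => ?_
    have := adm_le_Vq h0 hL (subset_closure hy) (hu k)
    linarith
  · refine ⟨1, one_pos, Eventually.of_forall fun k y _ hy φ hφ hm => ?_⟩
    rw [zero_mul, sub_zero]
    exact (hu k).2.2 φ hφ y hy hm


lemma minus_upper {Ω : Set (Eu n)} {α0 : Eu n → Matrix (Fin n) (Fin n) ℝ} {b : Eu n → Eu n}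
    {L : NNReal} (hop : IsOpen Ω) (h0 : (0 : Eu n) ∈ Ω) (hα : ContinuousOn α0 Ω)
    (hb : Continuous b) (hL0 : ∀ u, Adm α0 b Ω u → LipschitzOnWith L u (closure Ω))
    {l : Filter ℝ} {αm : ℝ → Eu n → Matrix (Fin n) (Fin n) ℝ} {td : ℝ → ℝ}
    (htd : Tendsto td l (𝓝 0))
    (hLm : ∀ᶠ δ in l, ∀ u, Adm (αm δ) b Ω u → LipschitzOnWith L u (closure Ω))
    (hloc : ∀ x ∈ Ω, ∃ r > 0, ∀ᶠ δ in l, ∀ y ∈ ball x r, y ∈ Ω → ∀ p,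
      mquad (α0 y) p - td δ * ‖p‖ ^ 2 ≤ mquad (αm δ y) p)
    {y0 : Eu n} (hy0 : y0 ∈ closure Ω) {c : ℝ} (hc : Vq α0 b Ω y0 < c) :
    ∀ᶠ δ in l, Vq (αm δ) b Ω y0 ≤ c := by
  by_contra hcon
  have hfr : ∃ᶠ δ in l, δ ∈ {δ | c < Vq (αm δ) b Ω y0} := by
    rw [Filter.Frequently]
    intro h
    apply hcon
    filter_upwards [h] with δ hδ
    exact not_lt.1 hδ
  haveI : NeBot (l ⊓ 𝓟 {δ | c < Vq (αm δ) b Ω y0}) := frequently_mem_iff_neBot.1 hfr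
  set U : Ultrafilter ℝ := Ultrafilter.of (l ⊓ 𝓟 {δ | c < Vq (αm δ) b Ω y0}) with hU
  have hUle : (U : Filter ℝ) ≤ l ⊓ 𝓟 {δ | c < Vq (αm δ) b Ω y0} := Ultrafilter.of_le _
  have hUl : (U : Filter ℝ) ≤ l := hUle.trans inf_le_left
  have hUb : ∀ᶠ δ in (U : Filter ℝ), c < Vq (αm δ) b Ω y0 :=
    (hUle.trans inf_le_right) (mem_principal_self _)
  choose! u hu huc using fun δ (h : c < Vq (αm δ) b Ω y0) => exists_adm_lt hop h
  have hadm : ∀ᶠ δ in (U : Filter ℝ), Adm (αm δ) b Ω (u δ) := by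
    filter_upwards [hUb] with δ hδ using hu δ hδ
  have hlip : ∀ᶠ δ in (U : Filter ℝ), LipschitzOnWith L (u δ) (closure Ω) := by
    filter_upwards [hadm, hUl hLm] with δ h1 h2 using h2 _ h1
  have hlim : ∀ x ∈ closure Ω, ∃ w : ℝ, Tendsto (fun δ => u δ x) U (𝓝 w) := by
    intro x hx
    have hmem : ∀ᶠ δ in (U : Filter ℝ), u δ x ∈ Icc (-(L * ‖x‖)) (L * ‖x‖) := by
      filter_upwards [hadm, hlip] with δ h1 h2
      have := h2.dist_le_mul x hx 0 (subset_closure h0)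
      rw [Real.dist_eq, h1.2.1, dist_eq_norm, sub_zero, sub_zero] at this
      exact abs_le.1 this
    obtain ⟨w, -, hw⟩ := isCompact_Icc.ultrafilter_le_nhds (U.map fun δ => u δ x)
      (le_principal_iff.2 hmem)
    exact ⟨w, hw⟩
  choose! W hW using hlim
  have hWlip : LipschitzOnWith L W (closure Ω) := by
    refine LipschitzOnWith.of_dist_le_mul fun x hx y hy => ?_
    refine le_of_tendsto ((hW x hx).dist (hW y hy)) ?_
    filter_upwards [hlip] with δ h using h.dist_le_mul x hx y hy
  have hW0 : W 0 = 0 := by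
    refine tendsto_nhds_unique (hW 0 (subset_closure h0)) ?_
    refine tendsto_const_nhds.congr' ?_
    filter_upwards [hadm] with δ h using h.2.1.symm
  have hWadm : Adm α0 b Ω W := by
    refine ⟨⟨L, hWlip⟩, hW0, fun φ hφ x hx hmax => ?_⟩
    refine stab (l := (U : Filter ℝ)) hop hα hb (u := u) (W := W) (t := td)
      (htd.mono_left hUl) hlip hx hWlip ?_ ?_ ?_ hφ hmax
    · intro ε hε
      exact (hW x (subset_closure hx)).eventually (lt_mem_nhds (by linarith))
    · intro y hy ε hε
      exact (hW y (subset_closure hy)).eventually (gt_mem_nhds (by linarith))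
    · obtain ⟨r, hr, hev⟩ := hloc x hx
      refine ⟨r, hr, ?_⟩
      filter_upwards [hadm, hUl hev] with δ h1 h2 y hyr hy φ hφ hm
      have h3 := h1.2.2 φ hφ y hy hm
      have h4 := h2 y hyr hy (gradient φ y)
      unfold Ham at *
      linarith
  have h1 := adm_le_Vq h0 hL0 hy0 hWadm
  have h2 : c ≤ W y0 := by
    refine ge_of_tendsto (hW y0 hy0) ?_
    filter_upwards [hUb] with δ hδ using (huc δ hδ).le
  linarith

lemma sqp_bound (s t : ℝ) : |max s 0 ^ 2 - max t 0 ^ 2 - 2 * max t 0 * (s - t)| ≤ (s - t) ^ 2 := by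
  rw [abs_le]
  rcases le_total s 0 with hs | hs <;> rcases le_total t 0 with ht | ht <;>
    simp only [max_eq_left, max_eq_right, hs, ht] <;> constructor <;> nlinarith

lemma sqp_hasDeriv (t : ℝ) : HasDerivAt (fun s : ℝ => max s 0 ^ 2) (2 * max t 0) t := by
  rw [hasDerivAt_iff_isLittleO]
  have h1 : (fun s : ℝ => max s 0 ^ 2 - max t 0 ^ 2 - (s - t) • (2 * max t 0)) =O[𝓝 t]
      fun s => (s - t) ^ 2 := by
    refine Asymptotics.IsBigO.of_bound 1 (Eventually.of_forall fun s => ?_)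
    rw [smul_eq_mul, one_mul, Real.norm_eq_abs, Real.norm_eq_abs, abs_of_nonneg (sq_nonneg (s - t)),
      mul_comm (s - t)]
    exact sqp_bound s t
  refine h1.trans_isLittleO ?_
  refine (Asymptotics.isLittleO_pow_sub_sub t one_lt_two).congr_left fun s => ?_
  rw [Real.norm_eq_abs, sq_abs]

lemma sqp_contDiff : ContDiff ℝ 1 (fun s : ℝ => max s 0 ^ 2) := by
  rw [contDiff_one_iff_deriv]
  refine ⟨fun t => (sqp_hasDeriv t).differentiableAt, ?_⟩
  have : deriv (fun s : ℝ => max s 0 ^ 2) = fun t => 2 * max t 0 := by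
    ext t; exact (sqp_hasDeriv t).deriv
  rw [this]; fun_prop

/-- smooth concave truncations -/
lemma exists_G {M ε : ℝ} (hM : 0 ≤ M) (hε : 0 < ε) :
    ∃ (G G' : ℝ → ℝ) (lam q c : ℝ), lam < 1 ∧ 0 ≤ q ∧ c < M ∧ G 0 = 0 ∧
      (∀ s t, |G s - G t - G' t * (s - t)| ≤ q * (s - t) ^ 2) ∧
      (∀ s, 0 ≤ G' s ∧ G' s ≤ lam) ∧ (∀ s, c < s → G s = G M) ∧ M - ε ≤ G M := by
  rcases le_or_gt M ε with hMe | hMe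
  · refine ⟨fun _ => 0, fun _ => 0, 0, 0, M - 1, by norm_num, le_rfl, by linarith, rfl, ?_, ?_, ?_, ?_⟩
    · intro s t; simp
    · intro s; simp
    · intro s _; rfl
    · simpa using hMe
  have hMpos : 0 < M := hε.trans hMe
  set e := ε / 4 with he
  have hepos : 0 < e := by positivity
  set c := M - e with hc
  set lam := 1 - e / M with hlam
  have heM : e / M < 1 := by rw [div_lt_one hMpos]; linarith
  have hlam0 : 0 < lam := by rw [hlam]; linarith
  have hlam1 : lam < 1 := by
    have : 0 < e / M := by positivity
    linarith
  set F : ℝ → ℝ := fun s => s - (max (s - c + e) 0 ^ 2 - max (s - c) 0 ^ 2) / (2 * e) with hF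
  set F' : ℝ → ℝ := fun s => 1 - (max (s - c + e) 0 - max (s - c) 0) / e with hF'
  have hFc : ∀ s, c < s → F s = c - e / 2 := by
    intro s hs
    simp only [hF]
    rw [max_eq_left (by linarith), max_eq_left (by linarith)]
    field_simp; ring
  have hF'b : ∀ s, 0 ≤ F' s ∧ F' s ≤ 1 := by
    intro s
    have h1 : 0 ≤ max (s - c + e) 0 - max (s - c) 0 := by
      have : max (s - c) 0 ≤ max (s - c + e) 0 := max_le_max (by linarith) le_rfl
      linarith
    have h2 : max (s - c + e) 0 - max (s - c) 0 ≤ e := by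
      have : max (s - c + e) 0 ≤ max (s - c) 0 + e :=
        max_le (by linarith [le_max_left (s - c) 0]) (by linarith [le_max_right (s - c) 0])
      linarith
    simp only [hF']
    constructor
    · have := (div_le_one hepos).2 h2; linarith
    · have := div_nonneg h1 hepos.le; linarith
  have hFq : ∀ s t, |F s - F t - F' t * (s - t)| ≤ 1 / e * (s - t) ^ 2 := by
    intro s t
    have h1 := abs_le.1 (sqp_bound (s - c + e) (t - c + e))
    have h2 := abs_le.1 (sqp_bound (s - c) (t - c))
    rw [show s - c + e - (t - c + e) = s - t by ring] at h1
    rw [show s - c - (t - c) = s - t by ring] at h2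
    have e1 : F s - F t - F' t * (s - t) =
        (-(max (s - c + e) 0 ^ 2 - max (t - c + e) 0 ^ 2 - 2 * max (t - c + e) 0 * (s - t))
          + (max (s - c) 0 ^ 2 - max (t - c) 0 ^ 2 - 2 * max (t - c) 0 * (s - t))) / (2 * e) := by
      simp only [hF, hF']
      field_simp; ring
    have e2 : 1 / e * (s - t) ^ 2 = 2 * (s - t) ^ 2 / (2 * e) := by field_simp
    rw [e1, e2, abs_div, abs_of_pos (show 0 < 2 * e by positivity)]
    gcongr
    rw [abs_le]; constructor <;> linarith
  refine ⟨fun s => lam * F s, fun s => lam * F' s, lam, 1 / e, c, hlam1, by positivity,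
    by linarith, ?_, ?_, ?_, ?_, ?_⟩
  · have : F 0 = 0 := by
      simp only [hF]
      rw [max_eq_right (by linarith), max_eq_right (by linarith)]
      simp
    simp [this]
  · intro s t
    have h1 := hFq s t
    have e1 : lam * F s - lam * F t - lam * F' t * (s - t) =
      lam * (F s - F t - F' t * (s - t)) := by ring
    rw [e1, abs_mul, abs_of_pos hlam0]
    have := abs_nonneg (F s - F t - F' t * (s - t))
    nlinarith
  · intro s
    obtain ⟨h1, h2⟩ := hF'b s
    constructor
    · positivity
    · nlinarith
  · intro s hs
    change lam * F s = lam * F M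
    rw [hFc s hs, hFc M (by linarith)]
  · change M - ε ≤ lam * F M
    rw [hFc M (by linarith)]
    have : lam * M = M - e := by rw [hlam]; field_simp
    nlinarith

set_option maxHeartbeats 800000 in
/-- the boundary bump -/
lemma exists_Psi {Ω : Set (Eu n)} (hop : IsOpen Ω) {ρ : Eu n → ℝ} (hρ : ContDiff ℝ 1 ρ)
    (hΩ : Ω = {x | ρ x < 0}) {b : Eu n → Eu n} (hb : Continuous b) {z : Eu n} (hz : z ∉ Ω)
    (hin : inner ℝ (b z) (gradient ρ z) < 0) {Λ R : ℝ} (hΛ : 0 ≤ Λ) (hR : 0 < R) :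
    ∃ Ψ : Eu n → ℝ, ContDiff ℝ 1 Ψ ∧ 0 < Ψ z ∧
      (∀ x ∈ Ω, ∀ α' : Eu n → Matrix (Fin n) (Fin n) ℝ, (∀ p, mquad (α' x) p ≤ Λ * ‖p‖ ^ 2) →
        Ham α' b x (gradient Ψ x) ≤ 0) ∧
      (∀ x ∈ Ω, R < ‖x - z‖ → ∀ᶠ y in 𝓝 x, Ψ y = 0) := by
  have hgc := c1_grad_cont hρ
  set c0 := -inner ℝ (b z) (gradient ρ z) / 2 with hc0
  have hc0p : 0 < c0 := by rw [hc0]; linarith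
  have hev : ∀ᶠ x in 𝓝 z, inner ℝ (b x) (gradient ρ x) < -c0 ∧ ‖b x‖ < ‖b z‖ + 1 ∧
      ‖gradient ρ x‖ < ‖gradient ρ z‖ + 1 := by
    refine ((hb.inner hgc).continuousAt.eventually (gt_mem_nhds ?_)).and
      ((hb.norm.continuousAt.eventually (gt_mem_nhds ?_)).and
      (hgc.norm.continuousAt.eventually (gt_mem_nhds ?_)))
    · rw [hc0]; linarith
    · linarith
    · linarith
  obtain ⟨r0, hr0, hball⟩ := Metric.eventually_nhds_iff.1 hev
  set r := min r0 R with hr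
  have hrp : 0 < r := lt_min hr0 hR
  set B := ‖b z‖ + 1 with hB
  set D := ‖gradient ρ z‖ + 1 with hD
  have hBp : 0 < B := by positivity
  have hDp : 0 < D := by positivity
  set K := c0 / (4 * r * B) with hK
  have hKp : 0 < K := by positivity
  set s := K * r ^ 2 with hs
  have hsp : 0 < s := by positivity
  set E := D + 2 * K * r with hE
  have hEp : 0 < E := by positivity
  set κ := c0 / (4 * s * (Λ * E ^ 2 + 1)) with hκ
  have hκp : 0 < κ := by positivity
  set f : Eu n → ℝ := fun x => ρ x + s - K * ‖x - z‖ ^ 2 with hf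
  have hfc : ContDiff ℝ 1 f := (hρ.add contDiff_const).sub (contDiff_const.mul (contDiff_sq z))
  have hfg : ∀ x, HasGradientAt f (gradient ρ x - K • (2:ℝ) • (x - z)) x := by
    intro x
    have h1 := hasGrad_add (c1_hasGrad hρ x) (hasGradientAt_const x s)
    rw [add_zero] at h1
    exact hasGrad_sub h1 (hasGrad_cmul K (hasGrad_sq z x))
  have hfneg : ∀ x ∈ Ω, 0 < f x → ‖x - z‖ < r := by
    intro x hx hfx
    have hx' : ρ x < 0 := by rw [hΩ] at hx; exact hx
    have : K * ‖x - z‖ ^ 2 < K * r ^ 2 := by simp only [hf] at hfx; linarith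
    have := lt_of_mul_lt_mul_left this hKp.le
    exact lt_of_pow_lt_pow_left₀ 2 hrp.le this
  have hΨg : ∀ x, HasGradientAt (fun y => κ * max (f y) 0 ^ 2)
      (κ • (2 * max (f x) 0) • (gradient ρ x - K • (2:ℝ) • (x - z))) x := by
    intro x
    apply hasGrad_cmul
    have h1 := hfg x
    rw [hasGradientAt_iff_hasFDerivAt] at h1 ⊢
    have h2 := (sqp_hasDeriv (f x)).comp_hasFDerivAt x h1
    rw [map_smul]
    exact h2
  refine ⟨fun y => κ * max (f y) 0 ^ 2, contDiff_const.mul (sqp_contDiff.comp hfc), ?_, ?_, ?_⟩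
  · have hρz : 0 ≤ ρ z := by rw [hΩ] at hz; exact not_lt.1 hz
    have : 0 < f z := by simp only [hf, sub_self, norm_zero]; linarith
    have : 0 < max (f z) 0 := lt_max_of_lt_left this
    positivity
  · intro x hx α' hα'
    rw [(hΨg x).gradient]
    rcases le_or_gt (f x) 0 with hfx | hfx
    · rw [max_eq_right hfx, mul_zero, zero_smul, smul_zero, ham_zero]
    rw [max_eq_left hfx.le, smul_smul]
    have hxr := hfneg x hx hfx
    obtain ⟨h1, h2, h3⟩ := hball (show dist x z < r0 by
      rw [dist_eq_norm]; exact hxr.trans_le (min_le_left _ _))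
    set g := gradient ρ x - K • (2:ℝ) • (x - z) with hg
    have hxs : f x ≤ s := by
      have hx' : ρ x < 0 := by rw [hΩ] at hx; exact hx
      have : 0 ≤ K * ‖x - z‖ ^ 2 := by positivity
      simp only [hf]; linarith
    have hgn : ‖g‖ ≤ E := by
      have h4 := norm_sub_le (gradient ρ x) (K • (2:ℝ) • (x - z))
      rw [norm_smul, norm_smul, Real.norm_of_nonneg hKp.le, Real.norm_of_nonneg zero_le_two] at h4
      have h5 : K * (2 * ‖x - z‖) ≤ K * (2 * r) := by gcongr
      rw [hE]; linarith
    have hbg : inner ℝ (b x) g ≤ -(c0 / 2) := by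
      rw [hg, inner_sub_right, inner_smul_right, inner_smul_right]
      have h4 := (abs_le.1 (abs_real_inner_le_norm (b x) (x - z))).1
      have h5 : ‖b x‖ * ‖x - z‖ ≤ B * r := by gcongr
      have h6 : K * (2 * (B * r)) = c0 / 2 := by rw [hK]; field_simp; norm_num
      have h7 : K * (2 * (-inner ℝ (b x) (x - z))) ≤ K * (2 * (B * r)) := by
        gcongr; linarith
      linarith
    set c := κ * (2 * f x) with hc
    have hcp : 0 < c := by positivity
    have hcs : c ≤ κ * (2 * s) := by rw [hc]; gcongr
    unfold Ham
    rw [mquad_vsmul, dotp_eq, inner_smul_right]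
    have h8 := hα' g
    have h9 : Λ * ‖g‖ ^ 2 ≤ Λ * E ^ 2 := by gcongr
    have h10 : κ * (2 * s) * (Λ * E ^ 2 + 1) = c0 / 2 := by rw [hκ]; field_simp; norm_num
    have hΛE : 0 ≤ Λ * E ^ 2 := by positivity
    have h11 : c * mquad (α' x) g ≤ c * (Λ * E ^ 2) := by
      apply mul_le_mul_of_nonneg_left _ hcp.le; linarith
    have h12 : c * (Λ * E ^ 2) ≤ κ * (2 * s) * (Λ * E ^ 2 + 1) := by
      apply mul_le_mul hcs (by linarith) hΛE (by positivity)
    have h13 : c * mquad (α' x) g + inner ℝ (b x) g ≤ 0 := by linarith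
    have e : c ^ 2 * mquad (α' x) g + c * inner ℝ (b x) g =
      c * (c * mquad (α' x) g + inner ℝ (b x) g) := by ring
    rw [e]
    exact mul_nonpos_of_nonneg_of_nonpos hcp.le h13
  · intro x hx hxR
    have h1 : ∀ᶠ y in 𝓝 x, R < ‖y - z‖ := by
      have : Continuous fun y : Eu n => ‖y - z‖ := by fun_prop
      exact this.continuousAt.eventually (lt_mem_nhds hxR)
    filter_upwards [h1, hop.mem_nhds hx] with y hy hyΩ
    have : f y ≤ 0 := by
      by_contra hc
      have := hfneg y hyΩ (not_le.1 hc)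
      have := min_le_right r0 R
      linarith
    rw [max_eq_right this]; simp


lemma plus_lower {Ω : Set (Eu n)} {α α' : Eu n → Matrix (Fin n) (Fin n) ℝ} {b : Eu n → Eu n}
    {L : NNReal} (hop : IsOpen Ω) (hbd : Bornology.IsBounded Ω) {V : Eu n → ℝ}
    (hVL : LipschitzOnWith L V (closure Ω)) (hV0 : V 0 = 0) (hV : ViscSub (Ham α b) Ω V)
    {G G' : ℝ → ℝ} {lam q : ℝ} (hlam : lam < 1) (hq : 0 ≤ q) (hG0 : G 0 = 0)
    (hGq : ∀ s t, |G s - G t - G' t * (s - t)| ≤ q * (s - t) ^ 2)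
    (hG' : ∀ s, 0 ≤ G' s ∧ G' s ≤ lam)
    {Ψ : Eu n → ℝ} (hΨ : ContDiff ℝ 1 Ψ) (hΨ0 : Ψ 0 = 0)
    (hpos : ∀ x ∈ Ω, ∀ p, 0 ≤ mquad (α' x) p)
    (hcase : ∀ x ∈ Ω, (∀ᶠ y in 𝓝 x, G (V y) = G (V x)) ∨
      ((∀ᶠ y in 𝓝 x, Ψ y = 0) ∧ ∀ p, lam * mquad (α' x) p ≤ mquad (α x) p))
    (hH : ∀ x ∈ Ω, Ham α' b x (gradient Ψ x) ≤ 0) :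
    Adm α' b Ω (fun x => G (V x) + Ψ x) := by
  have hK : IsCompact (closure Ω) := hbd.isCompact_closure
  refine ⟨?_, ?_, ?_⟩
  · obtain ⟨K1, hK1⟩ : ∃ K, LipschitzOnWith K Ψ (closure Ω) :=
      LocallyLipschitzOn.exists_lipschitzOnWith_of_compact hK
        (hΨ.locallyLipschitz.locallyLipschitzOn)
    obtain ⟨D, hD0, hD⟩ : ∃ D : ℝ, 0 ≤ D ∧ ∀ x ∈ closure Ω, ∀ y ∈ closure Ω, dist x y ≤ D :=
      ⟨diam (closure Ω), diam_nonneg, fun x hx y hy => dist_le_diam_of_mem hK.isBounded hx hy⟩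
    have hc0 : 0 ≤ (1 + q * (L * D)) * L := by positivity
    refine ⟨⟨(1 + q * (L * D)) * L, hc0⟩ + K1, ?_⟩
    have h1 : LipschitzOnWith ⟨(1 + q * (L * D)) * L, hc0⟩ (fun x => G (V x)) (closure Ω) := by
      refine LipschitzOnWith.of_dist_le_mul fun x hx y hy => ?_
      have h2 := hVL.dist_le_mul x hx y hy
      rw [Real.dist_eq] at h2
      have h3 : (L : ℝ) * dist x y ≤ L * D := by gcongr; exact hD x hx y hy
      change dist (G (V x)) (G (V y)) ≤ (1 + q * (L * D)) * L * dist x y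
      rw [Real.dist_eq]
      have h4 := hGq (V x) (V y)
      have h5 := hG' (V y)
      have h6 : |G (V x) - G (V y)| ≤ |G' (V y) * (V x - V y)| + q * (V x - V y) ^ 2 := by
        have := abs_add_le (G (V x) - G (V y) - G' (V y) * (V x - V y)) (G' (V y) * (V x - V y))
        rw [sub_add_cancel] at this
        linarith
      rw [abs_mul, abs_of_nonneg h5.1, ← sq_abs (V x - V y)] at h6
      set w := |V x - V y| with hw
      have hw0 : 0 ≤ w := abs_nonneg _
      have h7 : G' (V y) * w ≤ 1 * w := by gcongr; linarith
      have h8 : q * w ^ 2 ≤ q * (L * D) * w := by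
        have : q * w * w ≤ q * w * (L * D) := by gcongr; linarith
        linarith
      have h9 : (1 + q * (L * D)) * w ≤ (1 + q * (L * D)) * (L * dist x y) := by gcongr
      linarith
    exact h1.add hK1
  · change G (V 0) + Ψ 0 = 0
    rw [hV0, hG0, hΨ0, add_zero]
  · intro φ hφ x hx hmax
    have hmax' : ∀ᶠ y in 𝓝 x, G (V y) + Ψ y - φ y ≤ G (V x) + Ψ x - φ x := by
      have : IsLocalMax (fun y => G (V y) + Ψ y - φ y) x := hmax.isLocalMax (hop.mem_nhds hx)
      exact this
    rcases hcase x hx with h1 | ⟨h1, h2⟩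
    · have h3 : IsLocalMax (fun y => Ψ y - φ y) x := by
        filter_upwards [hmax', h1] with y hy1 hy2
        rw [hy2] at hy1; linarith
      have h4 := hasGrad_eq_zero (hasGrad_sub (c1_hasGrad hΨ x) (c1_hasGrad hφ x)) h3
      rw [← sub_eq_zero.1 h4]
      exact hH x hx
    · set g := G' (V x) with hg
      have hgb := hG' (V x)
      rw [← hg] at hgb
      have hΨx : Ψ x = 0 := h1.self_of_nhds
      have hKey : ∀ᶠ y in 𝓝 x, g * (V y - V x) ≤ φ y - φ x + q * L ^ 2 * ‖y - x‖ ^ 2 := by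
        filter_upwards [hmax', h1, hop.mem_nhds hx] with y hy1 hy2 hy3
        have h3 := (abs_le.1 (hGq (V y) (V x))).1
        have h4 := hVL.dist_le_mul y (subset_closure hy3) x (subset_closure hx)
        rw [Real.dist_eq, dist_eq_norm] at h4
        have h5 : (V y - V x) ^ 2 ≤ (L * ‖y - x‖) ^ 2 := by
          rw [← sq_abs (V y - V x)]; gcongr
        have h6 : q * (V y - V x) ^ 2 ≤ q * (L * ‖y - x‖) ^ 2 := by gcongr
        rw [mul_pow] at h6
        rw [hy2, hΨx] at hy1
        linarith
      have hS : HasGradientAt (fun y => φ y + q * L ^ 2 * ‖y - x‖ ^ 2) (gradient φ x) x := by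
        have := hasGrad_add (c1_hasGrad hφ x) (hasGrad_cmul (q * L ^ 2) (hasGrad_sq x x))
        rw [sub_self, smul_zero, smul_zero, add_zero] at this
        exact this
      rcases hgb.1.eq_or_lt with hg0 | hgp
      · have h3 : IsLocalMax (fun y => (0:ℝ) - (φ y + q * L ^ 2 * ‖y - x‖ ^ 2)) x := by
          filter_upwards [hKey] with y hy
          rw [← hg0, zero_mul] at hy
          simp only [sub_self, norm_zero]
          linarith
        have h4 := hasGrad_eq_zero (hasGrad_sub (hasGradientAt_const x (0:ℝ)) hS) h3
        rw [zero_sub, neg_eq_zero] at h4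
        rw [h4, ham_zero]
      · have hT := hasGrad_cmul g⁻¹ hS
        have hTc : ContDiff ℝ 1 (fun y => g⁻¹ * (φ y + q * L ^ 2 * ‖y - x‖ ^ 2)) :=
          contDiff_const.mul (hφ.add (contDiff_const.mul (contDiff_sq x)))
        have h3 : IsLocalMax (fun y => V y - g⁻¹ * (φ y + q * L ^ 2 * ‖y - x‖ ^ 2)) x := by
          filter_upwards [hKey] with y hy
          simp only [sub_self, norm_zero]
          have h5 : g⁻¹ * (g * (V y - V x)) ≤ g⁻¹ * (φ y - φ x + q * L ^ 2 * ‖y - x‖ ^ 2) :=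
            mul_le_mul_of_nonneg_left hy (inv_nonneg.2 hgp.le)
          rw [inv_mul_cancel_left₀ hgp.ne'] at h5
          linarith
        have h4 := hV _ hTc x hx (h3.on Ω)
        rw [hT.gradient] at h4
        set p := g⁻¹ • gradient φ x with hp
        have hpe : gradient φ x = g • p := by rw [hp, smul_smul, mul_inv_cancel₀ hgp.ne', one_smul]
        rw [hpe]
        unfold Ham at h4 ⊢
        rw [mquad_vsmul, dotp_eq, inner_smul_right]
        rw [dotp_eq] at h4
        have h5 := h2 p
        have h6 := mul_le_mul_of_nonneg_right hgb.2 (hpos x hx p)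
        have e : g ^ 2 * mquad (α' x) p + g * inner ℝ (b x) p =
          g * (g * mquad (α' x) p + inner ℝ (b x) p) := by ring
        rw [e]
        exact mul_nonpos_of_nonneg_of_nonpos hgp.le (by linarith)


lemma plus_lb {Ω : Set (Eu n)} {α0 : Eu n → Matrix (Fin n) (Fin n) ℝ} {b : Eu n → Eu n}
    {L : NNReal} (hop : IsOpen Ω) (hbd : Bornology.IsBounded Ω) (h0 : (0 : Eu n) ∈ Ω)
    (hα : ContinuousOn α0 Ω)
    (hb : Continuous b) (hL0 : ∀ u, Adm α0 b Ω u → LipschitzOnWith L u (closure Ω))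
    {l : Filter ℝ} {αp : ℝ → Eu n → Matrix (Fin n) (Fin n) ℝ} {td : ℝ → ℝ}
    (htd : Tendsto td l (𝓝 0)) (hid : Tendsto (fun δ => δ) l (𝓝 0)) {θ Λ : ℝ} (hθ : 0 < θ)
    (hLp : ∀ᶠ δ in l, ∀ u, Adm (αp δ) b Ω u → LipschitzOnWith L u (closure Ω))
    (hell : ∀ x ∈ Ω, ∀ p, θ * ‖p‖ ^ 2 ≤ mquad (α0 x) p)
    (hbds : ∀ᶠ δ in l, ∀ x ∈ Ω, ∀ p, 0 ≤ mquad (αp δ x) p ∧ mquad (αp δ x) p ≤ Λ * ‖p‖ ^ 2)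
    (hOm : ∀ᶠ δ in l, ∀ x ∈ Omd Ω δ, ∀ p,
      mquad (αp δ x) p ≤ mquad (α0 x) p + td δ * ‖p‖ ^ 2)
    (hne : (frontier Ω).Nonempty)
    {M ε : ℝ} (hM : 0 ≤ M) (hMV : ∀ y ∈ frontier Ω, M ≤ Vq α0 b Ω y) (hε : 0 < ε)
    {Ψ : Eu n → ℝ} (hΨ : ContDiff ℝ 1 Ψ) (hΨ0 : Ψ 0 = 0)
    (hΨz : ∀ x ∈ Ω, Vq α0 b Ω x < M → ∀ᶠ y in 𝓝 x, Ψ y = 0)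
    (hH : ∀ x ∈ Ω, ∀ α' : Eu n → Matrix (Fin n) (Fin n) ℝ, (∀ p, mquad (α' x) p ≤ Λ * ‖p‖ ^ 2) →
        Ham α' b x (gradient Ψ x) ≤ 0) :
    ∀ᶠ δ in l, ∀ y ∈ frontier Ω, M - ε + Ψ y ≤ Vq (αp δ) b Ω y := by
  obtain ⟨G, G', lam, q, c, hlam, hq, hcM, hG0, hGq, hG', hGc, hGM⟩ := exists_G hM hε
  have hlam0 : 0 ≤ lam := (hG' 0).1.trans (hG' 0).2
  have hVL := Vq_lip hop h0 hL0
  have hV0 := Vq_zero hop h0 hL0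
  have hV := Vq_visc hop h0 hα hb hL0
  have hpos : 0 < (1 - lam) * θ := mul_pos (by linarith) hθ
  have hLδ : ∀ᶠ δ in l, (L : ℝ) * δ < M - c := by
    have : Tendsto (fun δ => (L : ℝ) * δ) l (𝓝 (L * 0)) := hid.const_mul _
    rw [mul_zero] at this
    exact this.eventually (gt_mem_nhds (by linarith))
  have hfc : IsCompact (frontier Ω) :=
    hbd.isCompact_closure.of_isClosed_subset isClosed_frontier frontier_subset_closure
  filter_upwards [hLp, hbds, hOm, hLδ, htd.eventually (gt_mem_nhds hpos)] with δ g1 g2 g3 g4 g5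
  intro y hy
  have hadm : Adm (αp δ) b Ω (fun x => G (Vq α0 b Ω x) + Ψ x) := by
    refine plus_lower hop hbd hVL hV0 hV hlam hq hG0 hGq hG' hΨ hΨ0
      (fun x hx p => (g2 x hx p).1) ?_ (fun x hx => hH x hx _ fun p => (g2 x hx p).2)
    intro x hx
    rcases lt_or_ge c (Vq α0 b Ω x) with hcx | hcx
    · left
      have hcont : ContinuousAt (Vq α0 b Ω) x :=
        hVL.continuousOn.continuousAt (mem_of_superset (hop.mem_nhds hx) subset_closure)
      filter_upwards [hcont.eventually (lt_mem_nhds hcx)] with w hw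
      rw [hGc _ hw, hGc _ hcx]
    · right
      refine ⟨hΨz x hx (hcx.trans_lt hcM), fun p => ?_⟩
      have hxO : x ∈ Omd Ω δ := by
        refine ⟨hx, ?_⟩
        obtain ⟨w, hw, hwd⟩ := hfc.exists_infDist_eq_dist hne x
        rw [hwd]
        have h1 := hVL.dist_le_mul w (frontier_subset_closure hw) x (subset_closure hx)
        rw [Real.dist_eq, dist_comm] at h1
        have h2 := (le_abs_self _).trans h1
        have h3 := hMV w hw
        have h4 : (L : ℝ) * δ < L * dist x w := by linarith
        exact lt_of_mul_lt_mul_left h4 L.2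
      have h1 := mul_le_mul_of_nonneg_left (g3 x hxO p) hlam0
      have h2 := mul_le_mul_of_nonneg_left (hell x hx p) (show 0 ≤ 1 - lam by linarith)
      have h3 : lam * td δ * ‖p‖ ^ 2 ≤ (1 - lam) * θ * ‖p‖ ^ 2 := by
        refine mul_le_mul_of_nonneg_right ?_ (by positivity)
        have := mul_le_mul_of_nonneg_left g5.le hlam0
        have := mul_le_mul_of_nonneg_right hlam.le hpos.le
        linarith
      linarith
  have h1 := adm_le_Vq h0 g1 (frontier_subset_closure hy) hadm
  have h2 := hGc _ (hcM.trans_le (hMV y hy))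
  simp only [h2] at h1
  linarith

lemma thd_tendsto {Ω : Set (Eu n)} (hbd : Bornology.IsBounded Ω)
    {a : Eu n → ℝ → Matrix (Fin n) (Fin n) ℝ}
    (ha_cont : ContinuousOn (fun p : Eu n × ℝ => a p.1 p.2) (closure Ω ×ˢ Set.univ))
    {β₀ : ℝ} {θd : ℝ → ℝ}
    (hθd : ∀ δ : ℝ, θd δ = sSup {s : ℝ | ∃ x ∈ closure Ω, ∃ ξ : Eu n, ‖ξ‖ ≤ 1 ∧
      ∃ c : ℝ, |c - β₀| ≤ δ ∧ s = |mquad (a x c) ξ - mquad (a x β₀) ξ|}) (δ₀ : ℝ) :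
    Tendsto θd (nhdsWithin 0 (Set.Ioo 0 δ₀)) (𝓝 0) := by
  have hcomp : IsCompact ((closure Ω ×ˢ Icc (β₀ - 1) (β₀ + 1)) ×ˢ closedBall (0 : Eu n) 1) :=
    (hbd.isCompact_closure.prod isCompact_Icc).prod (isCompact_closedBall _ _)
  have hF : ContinuousOn (fun p : (Eu n × ℝ) × Eu n => mquad (a p.1.1 p.1.2) p.2)
      ((closure Ω ×ˢ Icc (β₀ - 1) (β₀ + 1)) ×ˢ closedBall (0 : Eu n) 1) := by
    have h1 : ContinuousOn (fun p : (Eu n × ℝ) × Eu n => a p.1.1 p.1.2)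
        ((closure Ω ×ˢ Icc (β₀ - 1) (β₀ + 1)) ×ˢ closedBall (0 : Eu n) 1) :=
      ContinuousOn.comp (g := fun p : Eu n × ℝ => a p.1 p.2) (f := Prod.fst) ha_cont
        continuous_fst.continuousOn fun p hp => ⟨hp.1.1, mem_univ _⟩
    have h2 : ContinuousOn (fun p : (Eu n × ℝ) × Eu n => (a p.1.1 p.1.2, p.2))
        ((closure Ω ×ˢ Icc (β₀ - 1) (β₀ + 1)) ×ˢ closedBall (0 : Eu n) 1) :=
      ContinuousOn.prodMk h1 continuous_snd.continuousOn
    intro p hp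
    have h3 := h2 p hp
    have h4 : Tendsto (fun q : Matrix (Fin n) (Fin n) ℝ × Eu n => mquad q.1 q.2)
      (𝓝 (a p.1.1 p.1.2, p.2)) (𝓝 (mquad (a p.1.1 p.1.2) p.2)) := mquad_cont.tendsto _
    have h5 := Tendsto.comp h4 h3
    refine Tendsto.congr (fun _ => rfl) h5
  have hu := hcomp.uniformContinuousOn_of_continuous hF
  rw [Metric.tendsto_nhds]
  intro ε hε
  obtain ⟨η, hη, h⟩ := Metric.uniformContinuousOn_iff.1 hu (ε / 2) (by linarith)
  have hev : ∀ᶠ δ in nhdsWithin 0 (Set.Ioo 0 δ₀), δ < min η 1 :=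
    nhdsWithin_le_nhds (gt_mem_nhds (lt_min hη one_pos))
  filter_upwards [hev, self_mem_nhdsWithin] with δ hδ hδm
  have h1 : 0 ≤ θd δ := by
    rw [hθd]
    refine Real.sSup_nonneg ?_
    rintro s ⟨x, -, ξ, -, c, -, rfl⟩
    exact abs_nonneg _
  have h2 : θd δ ≤ ε / 2 := by
    rw [hθd]
    refine Real.sSup_le ?_ (by linarith)
    rintro s ⟨x, hx, ξ, hξ, c, hc, rfl⟩
    have hc1 : |c - β₀| ≤ 1 := hc.trans (hδ.le.trans (min_le_right _ _))
    have hc2 : |c - β₀| < η := hc.trans_lt (hδ.trans_le (min_le_left _ _))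
    have hξ' : ξ ∈ closedBall (0 : Eu n) 1 := by simpa using hξ
    have hc3 := abs_le.1 hc1
    have := h ((x, c), ξ) ⟨⟨hx, by constructor <;> simp only <;> linarith⟩, hξ'⟩ ((x, β₀), ξ)
      ⟨⟨hx, by constructor <;> simp only <;> linarith⟩, hξ'⟩ (by
        simp [Prod.dist_eq, Real.dist_eq, hc2, hη])
    rw [Real.dist_eq] at this
    exact this.le
  rw [Real.dist_eq, sub_zero, abs_of_nonneg h1]
  linarith


/-- Proposition 3.1: continuity of the minima and argmins of the perturbed
quasi-potentials. -/
theorem stmt11 {n : ℕ} (θ₀ : ℝ) (hθ : θ₀ ∈ Set.Ioc (0:ℝ) 1)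
    (Ω : Set (Eu n)) (ν : Eu n → Eu n)
    (a : Eu n → ℝ → Matrix (Fin n) (Fin n) ℝ) (b : Eu n → Eu n)
    (hdom : IsBdC1With Ω ν) (h0 : (0 : Eu n) ∈ Ω)
    (ha_cont : ContinuousOn (fun p : Eu n × ℝ => a p.1 p.2) (closure Ω ×ˢ Set.univ))
    (ha_mem : ∀ x ∈ closure Ω, ∀ c : ℝ, memS θ₀ (a x c))
    (hbl : ∃ K : NNReal, LipschitzWith K b) (hb0 : b 0 = 0)
    (hgas : ∃ X : ℝ → Eu n → Eu n, GAS b X)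
    (hin : ∀ x ∈ frontier Ω, dotp (b x) (ν x) < 0)
    (β₀ δ₀ : ℝ) (hδ₀ : 0 < δ₀)
    (θd : ℝ → ℝ)
    (hθd : ∀ δ : ℝ, θd δ = sSup {s : ℝ | ∃ x ∈ closure Ω, ∃ ξ : Eu n, ‖ξ‖ ≤ 1 ∧
      ∃ c : ℝ, |c - β₀| ≤ δ ∧ s = |mquad (a x c) ξ - mquad (a x β₀) ξ|})
    (hθd_small : ∀ δ ∈ Set.Ioo (0:ℝ) δ₀, θd δ ≤ θ₀ / 2)
    (χ : ℝ → Eu n → ℝ)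
    (hχ : ∀ δ ∈ Set.Ioo (0:ℝ) δ₀, Continuous (χ δ) ∧
      (∀ x, χ δ x ∈ Set.Icc (0:ℝ) 1) ∧
      (∀ x ∈ Omd Ω δ, χ δ x = 1) ∧ (∀ x ∉ Omd Ω (δ / 2), χ δ x = 0)) :
    let αp : ℝ → Eu n → Matrix (Fin n) (Fin n) ℝ := fun δ x =>
      χ δ x • (a x β₀ + θd δ • (1 : Matrix (Fin n) (Fin n) ℝ)) +
        (1 - χ δ x) • (θ₀⁻¹ • (1 : Matrix (Fin n) (Fin n) ℝ))
    let αm : ℝ → Eu n → Matrix (Fin n) (Fin n) ℝ := fun δ x =>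
      χ δ x • (a x β₀ - θd δ • (1 : Matrix (Fin n) (Fin n) ℝ)) +
        (1 - χ δ x) • (θ₀ • (1 : Matrix (Fin n) (Fin n) ℝ))
    let M0 : ℝ := Mq (fun x => a x β₀) b Ω
    let Γ0 : Set (Eu n) := argminV (fun x => a x β₀) b Ω
    (Filter.Tendsto (fun δ => Mq (αp δ) b Ω) (nhdsWithin 0 (Set.Ioo 0 δ₀)) (nhds M0) ∧
     Filter.Tendsto (fun δ => Mq (αm δ) b Ω) (nhdsWithin 0 (Set.Ioo 0 δ₀)) (nhds M0)) ∧
    (KurLimsup δ₀ (fun δ => argminV (αp δ) b Ω) ∪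
      KurLimsup δ₀ (fun δ => argminV (αm δ) b Ω)) ⊆ Γ0 := by
  intro αp αm M0 Γ0
  obtain ⟨hop, hbd, ρ, hρ, hΩ, hfr⟩ := hdom
  obtain ⟨Kb, hKb⟩ := hbl
  obtain ⟨X, hX⟩ := hgas
  have hb : Continuous b := hKb.continuous
  have hθp : 0 < θ₀ := hθ.1
  have hinr : ∀ x ∈ frontier Ω, inner ℝ (b x) (gradient ρ x) < 0 := by
    intro x hx
    obtain ⟨h1, h2⟩ := hfr x hx
    have h3 := hin x hx
    rw [h2, dotp_eq, inner_smul_right] at h3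
    have h4 : 0 < ‖gradient ρ x‖⁻¹ := inv_pos.2 (norm_pos_iff.2 h1)
    by_contra hcon
    have := mul_nonneg h4.le (not_lt.1 hcon)
    linarith
  have hconn := omega_preconnected hop hρ hΩ h0 hinr hX
  obtain ⟨L, hLall⟩ := adm_lip hop hbd hρ hΩ (fun z hz => (hfr z hz).1) hconn h0 hb
    (half_pos hθp)
  set l : Filter ℝ := nhdsWithin 0 (Set.Ioo 0 δ₀) with hl
  have hlmem : ∀ᶠ δ in l, δ ∈ Ioo 0 δ₀ := self_mem_nhdsWithin
  have hid : Tendsto (fun δ : ℝ => δ) l (𝓝 0) := tendsto_id.mono_left nhdsWithin_le_nhds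
  have htd : Tendsto θd l (𝓝 0) := thd_tendsto hbd ha_cont hθd δ₀
  have htd0 : ∀ δ, 0 ≤ θd δ := by
    intro δ
    rw [hθd]
    refine Real.sSup_nonneg ?_
    rintro s ⟨x, -, ξ, -, c, -, rfl⟩
    exact abs_nonneg _
  have hem : ∀ x ∈ Ω, ∀ p, θ₀ * ‖p‖ ^ 2 ≤ mquad (a x β₀) p ∧
      mquad (a x β₀) p ≤ θ₀⁻¹ * ‖p‖ ^ 2 := fun x hx p =>
    (ha_mem x (subset_closure hx) β₀).2 p
  have hmp : ∀ δ x p, mquad (αp δ x) p = χ δ x * (mquad (a x β₀) p + θd δ * ‖p‖ ^ 2) +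
      (1 - χ δ x) * (θ₀⁻¹ * ‖p‖ ^ 2) := by
    intro δ x p
    simp only [αp, mquad_add, mquad_smul, mquad_one]
  have hmm : ∀ δ x p, mquad (αm δ x) p = χ δ x * (mquad (a x β₀) p - θd δ * ‖p‖ ^ 2) +
      (1 - χ δ x) * (θ₀ * ‖p‖ ^ 2) := by
    intro δ x p
    simp only [αm, mquad_add, mquad_sub, mquad_smul, mquad_one]
  set Λ : ℝ := θ₀⁻¹ + θ₀ / 2 with hΛ
  have hΛ0 : 0 ≤ Λ := by positivity
  have hpb : ∀ δ ∈ Ioo 0 δ₀, ∀ x ∈ Ω, ∀ p, mquad (a x β₀) p ≤ mquad (αp δ x) p ∧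
      mquad (αp δ x) p ≤ Λ * ‖p‖ ^ 2 := by
    intro δ hδ x hx p
    obtain ⟨e1, e2⟩ := hem x hx p
    obtain ⟨c1, c2⟩ := (hχ δ hδ).2.1 x
    have hN : 0 ≤ ‖p‖ ^ 2 := by positivity
    have t1 := mul_nonneg (htd0 δ) hN
    have t2 := mul_le_mul_of_nonneg_right (hθd_small δ hδ) hN
    have t3 : 0 ≤ θ₀ / 2 * ‖p‖ ^ 2 := by positivity
    rw [hmp, hΛ]
    constructor
    · have u1 := mul_nonneg c1 t1
      have u2 := mul_nonneg (sub_nonneg.2 c2) (sub_nonneg.2 e2)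
      linarith
    · have u1 := mul_nonneg c1 (show 0 ≤ (θ₀⁻¹ + θ₀ / 2) * ‖p‖ ^ 2 - mquad (a x β₀) p
        - θd δ * ‖p‖ ^ 2 by linarith)
      have u2 := mul_nonneg (sub_nonneg.2 c2) t3
      linarith
  have hmb : ∀ δ ∈ Ioo 0 δ₀, ∀ x ∈ Ω, ∀ p, mquad (αm δ x) p ≤ mquad (a x β₀) p ∧
      θ₀ / 2 * ‖p‖ ^ 2 ≤ mquad (αm δ x) p := by
    intro δ hδ x hx p
    obtain ⟨e1, e2⟩ := hem x hx p
    obtain ⟨c1, c2⟩ := (hχ δ hδ).2.1 x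
    have hN : 0 ≤ ‖p‖ ^ 2 := by positivity
    have t1 := mul_nonneg (htd0 δ) hN
    have t2 := mul_le_mul_of_nonneg_right (hθd_small δ hδ) hN
    have t3 : 0 ≤ θ₀ / 2 * ‖p‖ ^ 2 := by positivity
    rw [hmm]
    constructor
    · have u1 := mul_nonneg c1 t1
      have u2 := mul_nonneg (sub_nonneg.2 c2) (sub_nonneg.2 e1)
      linarith
    · have u1 := mul_nonneg c1 (show 0 ≤ mquad (a x β₀) p - θd δ * ‖p‖ ^ 2
        - θ₀ / 2 * ‖p‖ ^ 2 by linarith)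
      have u2 := mul_nonneg (sub_nonneg.2 c2) t3
      linarith
  have hL0 : ∀ u, Adm (fun x => a x β₀) b Ω u → LipschitzOnWith L u (closure Ω) := by
    refine hLall _ fun x hx p => ?_
    have := (hem x hx p).1
    have hN : 0 ≤ θ₀ / 2 * ‖p‖ ^ 2 := by positivity
    linarith
  have hLm : ∀ δ ∈ Ioo 0 δ₀, ∀ u, Adm (αm δ) b Ω u → LipschitzOnWith L u (closure Ω) :=
    fun δ hδ => hLall _ fun x hx p => (hmb δ hδ x hx p).2
  have hLp : ∀ δ ∈ Ioo 0 δ₀, ∀ u, Adm (αp δ) b Ω u → LipschitzOnWith L u (closure Ω) := by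
    refine fun δ hδ => hLall _ fun x hx p => ?_
    have h1 := (hpb δ hδ x hx p).1
    have := (hem x hx p).1
    have hN : 0 ≤ θ₀ / 2 * ‖p‖ ^ 2 := by positivity
    linarith
  have hαc : ContinuousOn (fun x => a x β₀) Ω := by
    refine ha_cont.comp (f := fun x : Eu n => (x, β₀)) (by fun_prop) fun x hx =>
      ⟨subset_closure hx, mem_univ _⟩
  rcases (frontier Ω).eq_empty_or_nonempty with hemp | hne
  · have hMq : ∀ α, Mq α b Ω = 0 := by
      intro α; simp [Mq, hemp]
    refine ⟨⟨?_, ?_⟩, ?_⟩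
    · simp only [M0, hMq]; exact tendsto_const_nhds
    · simp only [M0, hMq]; exact tendsto_const_nhds
    · rintro x (⟨δs, xs, -, -, h, -⟩ | ⟨δs, xs, -, -, h, -⟩)
      · have := (h 0).1
        rw [hemp] at this; exact this.elim
      · have := (h 0).1
        rw [hemp] at this; exact this.elim
  have hfsub : ∀ y ∈ frontier Ω, y ∈ closure Ω := fun y hy => frontier_subset_closure hy
  have hMle : ∀ α, (∀ u, Adm α b Ω u → LipschitzOnWith L u (closure Ω)) → ∀ y ∈ frontier Ω,
      Mq α b Ω ≤ Vq α b Ω y := by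
    intro α hα y hy
    refine csInf_le ⟨0, ?_⟩ (mem_image_of_mem _ hy)
    rintro _ ⟨w, hw, rfl⟩
    exact Vq_nonneg hop h0 hα (hfsub w hw)
  have hleM : ∀ α c, (∀ y ∈ frontier Ω, c ≤ Vq α b Ω y) → c ≤ Mq α b Ω := by
    intro α c h
    refine le_csInf (hne.image _) ?_
    rintro _ ⟨w, hw, rfl⟩
    exact h w hw
  have hM0V : ∀ y ∈ frontier Ω, M0 ≤ Vq (fun x => a x β₀) b Ω y := hMle _ hL0
  have hM0 : 0 ≤ M0 := hleM _ _ fun y hy => Vq_nonneg hop h0 hL0 (hfsub y hy)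
  have hVp : ∀ δ ∈ Ioo 0 δ₀, ∀ x ∈ closure Ω, Vq (αp δ) b Ω x ≤ Vq (fun x => a x β₀) b Ω x :=
    fun δ hδ x hx => Vq_mono hop h0 hL0 (fun y hy p => (hpb δ hδ y hy p).1) hx
  have hVm : ∀ δ ∈ Ioo 0 δ₀, ∀ x ∈ closure Ω, Vq (fun x => a x β₀) b Ω x ≤ Vq (αm δ) b Ω x :=
    fun δ hδ x hx => Vq_mono hop h0 (hLm δ hδ) (fun y hy p => (hmb δ hδ y hy p).1) hx
  have hMp : ∀ δ ∈ Ioo 0 δ₀, Mq (αp δ) b Ω ≤ M0 := fun δ hδ => hleM _ _ fun y hy =>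
    (hMle _ (hLp δ hδ) y hy).trans (hVp δ hδ y (hfsub y hy))
  have hMm : ∀ δ ∈ Ioo 0 δ₀, M0 ≤ Mq (αm δ) b Ω := fun δ hδ => hleM _ _ fun y hy =>
    (hM0V y hy).trans (hVm δ hδ y (hfsub y hy))
  have hOmp : ∀ᶠ δ in l, ∀ x ∈ Omd Ω δ, ∀ p,
      mquad (αp δ x) p ≤ mquad (a x β₀) p + θd δ * ‖p‖ ^ 2 := by
    filter_upwards [hlmem] with δ hδ x hx p
    rw [hmp, (hχ δ hδ).2.2.1 x hx]
    linarith
  have hbds : ∀ᶠ δ in l, ∀ x ∈ Ω, ∀ p, 0 ≤ mquad (αp δ x) p ∧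
      mquad (αp δ x) p ≤ Λ * ‖p‖ ^ 2 := by
    filter_upwards [hlmem] with δ hδ x hx p
    refine ⟨?_, (hpb δ hδ x hx p).2⟩
    have h1 := (hpb δ hδ x hx p).1
    have := (hem x hx p).1
    have hN : 0 ≤ θ₀ * ‖p‖ ^ 2 := by positivity
    linarith
  have hplus : ∀ ε > 0, ∀ Ψ : Eu n → ℝ, ContDiff ℝ 1 Ψ → Ψ 0 = 0 →
      (∀ x ∈ Ω, Vq (fun x => a x β₀) b Ω x < M0 → ∀ᶠ y in 𝓝 x, Ψ y = 0) →
      (∀ x ∈ Ω, ∀ α' : Eu n → Matrix (Fin n) (Fin n) ℝ,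
        (∀ p, mquad (α' x) p ≤ Λ * ‖p‖ ^ 2) → Ham α' b x (gradient Ψ x) ≤ 0) →
      ∀ᶠ δ in l, ∀ y ∈ frontier Ω, M0 - ε + Ψ y ≤ Vq (αp δ) b Ω y := by
    intro ε hε Ψ h1 h2 h3 h4
    exact plus_lb hop hbd h0 hαc hb hL0 htd hid hθp (hlmem.mono hLp)
      (fun x hx p => (hem x hx p).1) hbds hOmp hne hM0 hM0V hε h1 h2 h3 h4
  have hlocm : ∀ x ∈ Ω, ∃ r > 0, ∀ᶠ δ in l, ∀ y ∈ ball x r, y ∈ Ω → ∀ p,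
      mquad (a y β₀) p - θd δ * ‖p‖ ^ 2 ≤ mquad (αm δ y) p := by
    intro x hx
    have hd : 0 < infDist x (frontier Ω) := by
      rw [← isClosed_frontier.notMem_iff_infDist_pos hne]
      intro hxf
      rw [hop.frontier_eq] at hxf
      exact hxf.2 hx
    refine ⟨infDist x (frontier Ω) / 2, half_pos hd, ?_⟩
    filter_upwards [hlmem, hid.eventually (gt_mem_nhds (half_pos hd))] with δ hδ hδ2 y hy hyΩ p
    have h1 : y ∈ Omd Ω δ := by
      refine ⟨hyΩ, ?_⟩
      have h2 := infDist_le_infDist_add_dist (s := frontier Ω) (x := x) (y := y)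
      rw [mem_ball, dist_comm] at hy
      linarith
    rw [hmm, (hχ δ hδ).2.2.1 y h1]
    linarith
  have htm : Tendsto (fun δ => Mq (αm δ) b Ω) l (𝓝 M0) := by
    rw [tendsto_order]
    constructor
    · intro c hc
      filter_upwards [hlmem] with δ hδ using hc.trans_le (hMm δ hδ)
    · intro c hc
      obtain ⟨c', hc1, hc2⟩ := exists_between hc
      obtain ⟨_, ⟨y0, hy0, rfl⟩, hlt⟩ := exists_lt_of_csInf_lt (hne.image _) hc1
      have := minus_upper hop h0 hαc hb hL0 htd (hlmem.mono hLm) hlocm (hfsub y0 hy0) hlt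
      filter_upwards [hlmem, this] with δ hδ h1
      exact ((hMle _ (hLm δ hδ) y0 hy0).trans h1).trans_lt hc2
  have hz : ∀ x : Eu n, gradient (fun _ : Eu n => (0:ℝ)) x = 0 := fun x =>
    (hasGradientAt_const x (0:ℝ)).gradient
  have htp : Tendsto (fun δ => Mq (αp δ) b Ω) l (𝓝 M0) := by
    rw [tendsto_order]
    constructor
    · intro c hc
      have h1 := hplus ((M0 - c) / 2) (by linarith) (fun _ => 0) contDiff_const rfl
        (fun x _ _ => Eventually.of_forall fun _ => rfl)
        (fun x _ α' _ => by rw [hz, ham_zero])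
      filter_upwards [h1] with δ h2
      have := hleM (αp δ) (M0 - (M0 - c) / 2) fun y hy => by
        have := h2 y hy
        linarith
      linarith
    · intro c hc
      filter_upwards [hlmem] with δ hδ using (hMp δ hδ).trans_lt hc
  have hVc : ContinuousOn (Vq (fun x => a x β₀) b Ω) (closure Ω) :=
    (Vq_lip hop h0 hL0).continuousOn
  have hfin : ∀ z ∈ frontier Ω, Vq (fun x => a x β₀) b Ω z ≤ M0 → z ∈ Γ0 :=
    fun z hz h => ⟨hz, fun y hy => h.trans (hM0V y hy)⟩
  refine ⟨⟨htp, htm⟩, ?_⟩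
  rintro z (⟨δs, xs, hδs, hδ0, hxs, hxz⟩ | ⟨δs, xs, hδs, hδ0, hxs, hxz⟩)
  · have hzf : z ∈ frontier Ω :=
      isClosed_frontier.mem_of_tendsto hxz (Eventually.of_forall fun k => (hxs k).1)
    have hδl : Tendsto δs atTop l :=
      tendsto_nhdsWithin_iff.2 ⟨hδ0, Eventually.of_forall hδs⟩
    refine hfin z hzf ?_
    by_contra hcon
    have hcon := not_le.1 hcon
    have hzn : z ∉ Ω := by
      intro h
      rw [hop.frontier_eq] at hzf
      exact hzf.2 h
    have hzp : 0 < ‖z‖ := by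
      rw [norm_pos_iff]; rintro rfl; exact hzn h0
    have hev : ∀ᶠ x in 𝓝[closure Ω] z, M0 < Vq (fun x => a x β₀) b Ω x :=
      (hVc z (hfsub z hzf)).eventually (lt_mem_nhds hcon)
    obtain ⟨r, hr, hball⟩ := Metric.mem_nhdsWithin_iff.1 hev
    set R := min r ‖z‖ / 2 with hR
    have hmin : 0 < min r ‖z‖ := lt_min hr hzp
    have hRp : 0 < R := by rw [hR]; linarith
    have hRr : R < r := by have := min_le_left r ‖z‖; rw [hR]; linarith
    have hRz : R < ‖z‖ := by have := min_le_right r ‖z‖; rw [hR]; linarith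
    obtain ⟨Ψ, hΨ, hΨz, hΨH, hΨ0⟩ := exists_Psi hop hρ hΩ hb hzn (hinr z hzf) hΛ0 hRp
    have hΨ00 : Ψ 0 = 0 :=
      (hΨ0 0 h0 (by rw [zero_sub, norm_neg]; exact hRz)).self_of_nhds
    have h1 := hplus (Ψ z / 4) (by linarith) Ψ hΨ hΨ00 (fun x hx hxV => hΨ0 x hx (by
      by_contra hle
      have hlt : dist x z < r := by rw [dist_eq_norm]; linarith
      have : M0 < Vq (fun x => a x β₀) b Ω x := hball ⟨mem_ball.2 hlt, subset_closure hx⟩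
      linarith)) hΨH
    have h2 : ∀ᶠ k in atTop, Ψ (xs k) ≤ Ψ z / 4 := by
      filter_upwards [hδl.eventually h1] with k hk
      have h3 := hk (xs k) (hxs k).1
      have h4 : Vq (αp (δs k)) b Ω (xs k) ≤ M0 :=
        (hleM _ _ (hxs k).2).trans (hMp _ (hδs k))
      linarith
    have h3 := le_of_tendsto ((hΨ.continuous.tendsto z).comp hxz) h2
    linarith
  · have hzf : z ∈ frontier Ω :=
      isClosed_frontier.mem_of_tendsto hxz (Eventually.of_forall fun k => (hxs k).1)
    have hδl : Tendsto δs atTop l :=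
      tendsto_nhdsWithin_iff.2 ⟨hδ0, Eventually.of_forall hδs⟩
    refine hfin z hzf ?_
    have h1 : Tendsto (fun k => Vq (fun x => a x β₀) b Ω (xs k)) atTop
        (𝓝 (Vq (fun x => a x β₀) b Ω z)) :=
      (hVc z (hfsub z hzf)).tendsto.comp (tendsto_nhdsWithin_iff.2
        ⟨hxz, Eventually.of_forall fun k => hfsub _ (hxs k).1⟩)
    refine le_of_tendsto_of_tendsto' h1 (htm.comp hδl) fun k => ?_
    exact (hVm _ (hδs k) _ (hfsub _ (hxs k).1)).trans (hleM _ _ (hxs k).2)
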